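/- arXiv:2408.04143 — 4 statements merged into one kernel-verified Lean document; each statement's English description precedes it below -/
import Mathlib

section
/- The limit superior s_3 = limsup_{x→∞} |W_3(x)|/x^{log 3/log 2} satisfies |s_3 − 0.813| ≤ 0.158; in particular s_3 < 1. -/
open Finset Filter ArithmeticFunction Real

/-- `Wa a x = ∑_{1 ≤ n ≤ x} (-a)^{Ω(n)}`. -/
noncomputable def Wa (a x : ℝ) : ℝ :=
  ∑ n ∈ Finset.Icc 1 ⌊x⌋₊, (-a) ^ (cardFactors n)

/-!
Let `θ = log 3 / log 2` and `D(n) = W_3(n) - W_3(n / 2)`, the sum over a dyadic range. Sorting the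
integers by parity gives `4 W_3(n) = 3 D(n) + U(n)` and `D(n) = -3 D(n / 2) + U(n) - U(n / 2)`,
where `U` is the part of `W_3` supported on the odd integers.

The weights `3 ^ Ω(m) / m ^ θ` of the odd `m` have a finite sum, bounded by an Euler product. Hence
`U(n) = o(n ^ θ)`, so the limsup is `3 / 4` times that of `|D(n)| / n ^ θ`. Moreover, iterating the
recursion shows that `D(n)` differs from `(-3) ^ j * D(n / 2 ^ j)` by at most `n ^ θ` times the
weight of the odd integers above `n / 2 ^ j`. When `n / 2 ^ j` lies in the window
`[2 ^ 15, 2 ^ 16)`, that weight is at most `0.2`, so only the size of `D` on the window matters.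
It is found by computation, as are the partial sum and the partial Euler product at `2 ^ 15`.
-/

/-! ### The exponent -/

/-- The exponent `log 3 / log 2`, characterised by `2 ^ theta = 3`. -/
noncomputable def theta : ℝ := Real.log 3 / Real.log 2

theorem two_rpow_theta : (2 : ℝ) ^ theta = 3 :=
  Real.rpow_logb two_pos (by norm_num) three_pos

theorem two_pow_rpow_theta (j : ℕ) : ((2 : ℝ) ^ j) ^ theta = 3 ^ j := by
  rw [← Real.rpow_natCast, ← Real.rpow_mul two_pos.le, mul_comm, Real.rpow_mul two_pos.le,
    two_rpow_theta, Real.rpow_natCast]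

theorem theta_lower : 1.584 ≤ theta := by
  have h : Real.log ((2 : ℝ) ^ 84) ≤ Real.log ((3 : ℝ) ^ 53) :=
    Real.log_le_log (by norm_num) (by norm_num)
  rw [Real.log_pow, Real.log_pow] at h
  rw [theta, le_div_iff₀ (Real.log_pos one_lt_two)]
  push_cast at h
  linarith [Real.log_pos one_lt_two]

theorem theta_upper : theta ≤ 1.5851 := by
  have h : Real.log ((3 : ℝ) ^ 147) ≤ Real.log ((2 : ℝ) ^ 233) :=
    Real.log_le_log (by norm_num) (by norm_num)
  rw [Real.log_pow, Real.log_pow] at h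
  rw [theta, div_le_iff₀ (Real.log_pos one_lt_two)]
  push_cast at h
  linarith [Real.log_pos one_lt_two]

theorem theta_pos : 0 < theta := by linarith [theta_lower]

theorem tendsto_natCast_rpow_theta : Tendsto (fun n : ℕ ↦ (n : ℝ) ^ theta) atTop atTop :=
  (tendsto_rpow_atTop theta_pos).comp tendsto_natCast_atTop_atTop

theorem rpow_mul_one_add_mul_div_le_add_rpow {s x h : ℝ} (hs : 1 ≤ s) (hx : 0 < x) (hh : -x ≤ h) :
    x ^ s * (1 + s * (h / x)) ≤ (x + h) ^ s := by
  have hdiv : -1 ≤ h / x := by rwa [le_div_iff₀ hx, neg_one_mul]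
  calc x ^ s * (1 + s * (h / x)) ≤ x ^ s * (1 + h / x) ^ s := by
        gcongr
        exact one_add_mul_self_le_rpow_one_add hdiv hs
    _ = (x + h) ^ s := by
        rw [← Real.mul_rpow hx.le (by linarith)]
        congr 1
        field_simp

theorem sub_one_mul_div_rpow_le_sub {s x h : ℝ} (hs : 1 ≤ s) (hx : 0 < x) (hh : 0 ≤ h) :
    (s - 1) * h / (x + h) ^ s ≤ x / x ^ s - (x + h) / (x + h) ^ s := by
  have : 0 < x + h := by linarith
  have hbernoulli := rpow_mul_one_add_mul_div_le_add_rpow hs hx (by linarith : -x ≤ h)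
  have hmul : x ^ s * (x + s * h) ≤ x * (x + h) ^ s := by
    calc x ^ s * (x + s * h) = x * (x ^ s * (1 + s * (h / x))) := by field_simp
      _ ≤ x * (x + h) ^ s := by gcongr
  rw [le_sub_iff_add_le, ← add_div, div_le_div_iff₀ (by positivity) (by positivity)]
  linarith

theorem div_rpow_le_div_rpow {s x y : ℝ} (hs : 1 ≤ s) (hx : 0 < x) (hxy : x ≤ y) :
    y / y ^ s ≤ x / x ^ s := by
  obtain ⟨h, rfl⟩ := exists_add_of_le hxy
  have hh : 0 ≤ h := by linarith
  have : 0 ≤ s - 1 := sub_nonneg.2 hs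
  exact sub_nonneg.1 (le_trans (by positivity) (sub_one_mul_div_rpow_le_sub hs hx hh))

/-! ### The dyadic recursion -/

/-- The part of the sum `Wa a n` that comes from the odd integers. -/
noncomputable def oddWa (a : ℝ) (n : ℕ) : ℝ :=
  ∑ m ∈ Icc 1 n with Odd m, (-a) ^ cardFactors m

/-- The sum of `(-a) ^ Ω(m)` over the dyadic range `n / 2 < m ≤ n`. -/
noncomputable def dyadicWa (a : ℝ) (n : ℕ) : ℝ :=
  Wa a n - Wa a (n / 2 : ℕ)

theorem cardFactors_two_mul {n : ℕ} (hn : n ≠ 0) : cardFactors (2 * n) = cardFactors n + 1 := by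
  rw [cardFactors_mul two_ne_zero hn, cardFactors_apply_prime Nat.prime_two, add_comm]

section DyadicRecursion

variable (a : ℝ)

theorem Wa_natCast_succ (n : ℕ) :
    Wa a (n + 1 : ℕ) = Wa a n + (-a) ^ cardFactors (n + 1) := by
  rw [Wa, Wa, Nat.floor_natCast, Nat.floor_natCast, sum_Icc_succ_top (by omega)]

theorem oddWa_succ (n : ℕ) :
    oddWa a (n + 1) = oddWa a n + if Odd (n + 1) then (-a) ^ cardFactors (n + 1) else 0 := by
  rw [oddWa, oddWa, sum_filter, sum_filter, sum_Icc_succ_top (by omega)]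

theorem Wa_natCast_eq (n : ℕ) : Wa a n = oddWa a n - a * Wa a (n / 2 : ℕ) := by
  induction n with
  | zero => simp [Wa, oddWa]
  | succ n ih =>
    rw [Wa_natCast_succ, oddWa_succ, ih]
    rcases n.even_or_odd' with ⟨k, rfl | rfl⟩
    · have hodd : Odd (2 * k + 1) := odd_two_mul_add_one k
      rw [if_pos hodd, show (2 * k + 1) / 2 = 2 * k / 2 by omega]
      ring
    · have heven : ¬ Odd (2 * k + 1 + 1) := by simp [parity_simps]
      rw [if_neg heven, show (2 * k + 1 + 1) / 2 = k + 1 by omega,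
        show (2 * k + 1) / 2 = k by omega, Wa_natCast_succ,
        show 2 * k + 1 + 1 = 2 * (k + 1) by ring, cardFactors_two_mul k.succ_ne_zero]
      ring

theorem add_one_mul_Wa_natCast (n : ℕ) : (a + 1) * Wa a n = a * dyadicWa a n + oddWa a n := by
  rw [dyadicWa]
  linarith [Wa_natCast_eq a n]

theorem mul_dyadicWa_eq (n : ℕ) : a * dyadicWa a n = (a + 1) * Wa a n - oddWa a n := by
  linarith [add_one_mul_Wa_natCast a n]

theorem dyadicWa_eq (n : ℕ) :
    dyadicWa a n = -a * dyadicWa a (n / 2) + (oddWa a n - oddWa a (n / 2)) := by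
  rw [dyadicWa, dyadicWa]
  linarith [Wa_natCast_eq a n, Wa_natCast_eq a (n / 2)]

theorem mul_dyadicWa_succ (n : ℕ) :
    a * dyadicWa a (n + 1) =
      a * dyadicWa a n + (if Even (n + 1) then a + 1 else a) * (-a) ^ cardFactors (n + 1) := by
  rw [mul_dyadicWa_eq, mul_dyadicWa_eq, Wa_natCast_succ, oddWa_succ]
  simp only [← Nat.not_even_iff_odd, ite_not]
  split_ifs <;> ring

end DyadicRecursion

/-! ### The normalised weight `3 ^ Ω(n) / n ^ theta` -/

/-- The completely multiplicative function `n ↦ 3 ^ Ω(n) / n ^ theta`; at `0` its value is the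
junk value `1 / 0 = 0`. -/
noncomputable def omegaWeight : ℕ →* ℝ where
  toFun n := 3 ^ cardFactors n / (n : ℝ) ^ theta
  map_one' := by simp
  map_mul' m n := by
    rcases eq_or_ne m 0 with rfl | hm
    · simp [theta_pos.ne']
    rcases eq_or_ne n 0 with rfl | hn
    · simp [theta_pos.ne']
    rw [cardFactors_mul hm hn, pow_add, Nat.cast_mul,
      Real.mul_rpow m.cast_nonneg n.cast_nonneg, mul_div_mul_comm]

theorem omegaWeight_apply (n : ℕ) : omegaWeight n = 3 ^ cardFactors n / (n : ℝ) ^ theta := rfl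

theorem omegaWeight_nonneg (n : ℕ) : 0 ≤ omegaWeight n := by
  rw [omegaWeight_apply]
  positivity

theorem omegaWeight_two_mul (n : ℕ) : omegaWeight (2 * n) = omegaWeight n := by
  have htwo : omegaWeight 2 = 1 := by
    rw [omegaWeight_apply, cardFactors_apply_prime Nat.prime_two, Nat.cast_two, two_rpow_theta]
    norm_num
  rw [map_mul, htwo, one_mul]

theorem omegaWeight_prime {p : ℕ} (hp : p.Prime) : omegaWeight p = 3 / (p : ℝ) ^ theta := by
  rw [omegaWeight_apply, cardFactors_apply_prime hp, pow_one]

theorem rpow_theta_mul_omegaWeight {n : ℕ} (hn : n ≠ 0) :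
    (n : ℝ) ^ theta * omegaWeight n = 3 ^ cardFactors n := by
  rw [omegaWeight_apply, mul_div_cancel₀]
  positivity

/-- The weight `omegaWeight` restricted to the odd integers, still completely multiplicative. -/
noncomputable def oddOmegaWeight : ℕ →* ℝ where
  toFun n := if Odd n then omegaWeight n else 0
  map_one' := by simp
  map_mul' m n := by
    by_cases hm : Odd m <;> by_cases hn : Odd n <;> simp [Nat.odd_mul, hm, hn]

theorem oddOmegaWeight_apply (n : ℕ) :
    oddOmegaWeight n = if Odd n then omegaWeight n else 0 := rfl

theorem oddOmegaWeight_nonneg (n : ℕ) : 0 ≤ oddOmegaWeight n := by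
  rw [oddOmegaWeight_apply]
  split_ifs
  exacts [omegaWeight_nonneg n, le_rfl]

theorem oddOmegaWeight_prime_lt_one {p : ℕ} (hp : p.Prime) : oddOmegaWeight p < 1 := by
  rw [oddOmegaWeight_apply]
  split_ifs with hodd
  · have htwo : (2 : ℝ) < p := by
      have := hp.two_le.lt_of_ne (by rintro rfl; exact absurd hodd (by decide))
      exact_mod_cast this
    have hpow := Real.rpow_lt_rpow two_pos.le htwo theta_pos
    rw [two_rpow_theta] at hpow
    rwa [omegaWeight_prime hp, div_lt_one (by linarith)]
  · exact one_pos

/-- The total weight of the odd integers below `N`. -/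
noncomputable def oddMass (N : ℕ) : ℝ :=
  ∑ m ∈ range N, oddOmegaWeight m

theorem oddMass_mono : Monotone oddMass := fun _ _ hMN ↦
  sum_le_sum_of_subset_of_nonneg (range_mono hMN) fun m _ _ ↦ oddOmegaWeight_nonneg m

theorem abs_oddWa_sub_le {m n : ℕ} (hmn : m ≤ n) :
    |oddWa 3 n - oddWa 3 m| ≤ (n : ℝ) ^ theta * (oddMass (n + 1) - oddMass (m + 1)) := by
  induction n, hmn using Nat.le_induction with
  | base => simp
  | succ n hmn ih =>
    have hterm : |if Odd (n + 1) then (-3 : ℝ) ^ cardFactors (n + 1) else 0| =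
        ((n + 1 : ℕ) : ℝ) ^ theta * oddOmegaWeight (n + 1) := by
      rw [oddOmegaWeight_apply]
      split_ifs
      · rw [rpow_theta_mul_omegaWeight n.succ_ne_zero, abs_pow, abs_neg, abs_of_pos three_pos]
      · simp
    have hmass : 0 ≤ oddMass (n + 1) - oddMass (m + 1) :=
      sub_nonneg.2 (oddMass_mono (by omega))
    have hrpow : (n : ℝ) ^ theta ≤ ((n + 1 : ℕ) : ℝ) ^ theta :=
      Real.rpow_le_rpow n.cast_nonneg (by simp) theta_pos.le
    calc |oddWa 3 (n + 1) - oddWa 3 m|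
        ≤ |oddWa 3 n - oddWa 3 m| +
            |if Odd (n + 1) then (-3 : ℝ) ^ cardFactors (n + 1) else 0| := by
          rw [oddWa_succ, add_sub_right_comm]
          exact abs_add_le _ _
      _ ≤ ((n + 1 : ℕ) : ℝ) ^ theta * (oddMass (n + 1) - oddMass (m + 1)) +
            ((n + 1 : ℕ) : ℝ) ^ theta * oddOmegaWeight (n + 1) :=
          add_le_add (ih.trans (mul_le_mul_of_nonneg_right hrpow hmass)) hterm.le
      _ = ((n + 1 : ℕ) : ℝ) ^ theta * (oddMass (n + 1 + 1) - oddMass (m + 1)) := by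
          rw [oddMass, oddMass, oddMass, sum_range_succ _ (n + 1)]
          ring

theorem three_pow_mul_div_rpow_le (N j : ℕ) :
    3 ^ j * ((N / 2 ^ j : ℕ) : ℝ) ^ theta ≤ (N : ℝ) ^ theta := by
  rw [← two_pow_rpow_theta, ← Real.mul_rpow (by positivity) (by positivity)]
  exact Real.rpow_le_rpow (by positivity) (by exact_mod_cast Nat.mul_div_le N (2 ^ j)) theta_pos.le

theorem abs_dyadicWa_sub_le (N j : ℕ) :
    |dyadicWa 3 N - (-3) ^ j * dyadicWa 3 (N / 2 ^ j)| ≤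
      (N : ℝ) ^ theta * (oddMass (N + 1) - oddMass (N / 2 ^ j + 1)) := by
  induction j with
  | zero => simp
  | succ j ih =>
    rw [pow_succ 2, ← Nat.div_div_eq_div_mul]
    have hscale := three_pow_mul_div_rpow_le N j
    set n := N / 2 ^ j
    have hmass : 0 ≤ oddMass (n + 1) - oddMass (n / 2 + 1) :=
      sub_nonneg.2 (oddMass_mono (Nat.succ_le_succ (n.div_le_self 2)))
    have hstep : |(-3 : ℝ) ^ j * (oddWa 3 n - oddWa 3 (n / 2))| ≤
        (N : ℝ) ^ theta * (oddMass (n + 1) - oddMass (n / 2 + 1)) := by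
      rw [abs_mul, abs_pow, abs_neg, abs_of_pos three_pos]
      calc 3 ^ j * |oddWa 3 n - oddWa 3 (n / 2)|
          ≤ 3 ^ j * ((n : ℝ) ^ theta * (oddMass (n + 1) - oddMass (n / 2 + 1))) := by
            gcongr
            exact abs_oddWa_sub_le (n.div_le_self 2)
        _ = 3 ^ j * (n : ℝ) ^ theta * (oddMass (n + 1) - oddMass (n / 2 + 1)) := by ring
        _ ≤ _ := mul_le_mul_of_nonneg_right hscale hmass
    calc |dyadicWa 3 N - (-3) ^ (j + 1) * dyadicWa 3 (n / 2)|
        = |dyadicWa 3 N - (-3) ^ j * dyadicWa 3 n +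
            (-3) ^ j * (oddWa 3 n - oddWa 3 (n / 2))| := by
          rw [dyadicWa_eq 3 n]
          ring_nf
      _ ≤ _ := (abs_add_le _ _).trans (add_le_add ih hstep)
      _ = _ := by ring

/-! ### The Euler product over the odd primes -/

/-- The partial Euler product of `oddOmegaWeight`; the prime `2` contributes the factor `1`. -/
noncomputable def oddEulerProduct (N : ℕ) : ℝ :=
  ∏ p ∈ N.primesBelow, (1 - oddOmegaWeight p)⁻¹

theorem oddMass_le_oddEulerProduct (N : ℕ) : oddMass N ≤ oddEulerProduct N := by
  have hnorm {p : ℕ} (hp : p.Prime) : ‖oddOmegaWeight p‖ < 1 := by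
    rw [Real.norm_of_nonneg (oddOmegaWeight_nonneg p)]
    exact oddOmegaWeight_prime_lt_one hp
  have hsum : HasSum (N.smoothNumbers.indicator oddOmegaWeight) (oddEulerProduct N) :=
    hasSum_subtype_iff_indicator.1
      (EulerProduct.summable_and_hasSum_smoothNumbers_prod_primesBelow_geometric hnorm N).2
  have hsmooth : ∀ m ∈ range N, oddOmegaWeight m = N.smoothNumbers.indicator oddOmegaWeight m := by
    intro m hm
    rcases eq_or_ne m 0 with rfl | hm0
    · simp [Set.indicator, oddOmegaWeight_apply]
    · refine (Set.indicator_of_mem (Nat.mem_smoothNumbers.2 ⟨hm0, fun p hp ↦ ?_⟩) _).symm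
      exact (Nat.le_of_mem_primeFactorsList hp).trans_lt (mem_range.1 hm)
  rw [oddMass, sum_congr rfl hsmooth]
  exact sum_le_hasSum _ (fun m _ ↦ Set.indicator_nonneg (fun m _ ↦ oddOmegaWeight_nonneg m) m) hsum

theorem oddEulerProduct_nonneg (N : ℕ) : 0 ≤ oddEulerProduct N :=
  prod_nonneg fun _ hp ↦ inv_nonneg.2 <| sub_nonneg.2 <|
    (oddOmegaWeight_prime_lt_one (Nat.prime_of_mem_primesBelow hp)).le

theorem oddEulerProduct_succ (N : ℕ) :
    oddEulerProduct (N + 1) =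
      (if N.Prime then (1 - oddOmegaWeight N)⁻¹ else 1) * oddEulerProduct N := by
  rw [oddEulerProduct, Nat.primesBelow_succ]
  split_ifs
  · exact prod_insert N.notMem_primesBelow
  · exact (one_mul _).symm

theorem inv_one_sub_le_exp {t : ℝ} (ht : t < 1) : (1 - t)⁻¹ ≤ Real.exp (t / (1 - t)) := by
  have hpos : 0 < 1 - t := sub_pos.2 ht
  calc (1 - t)⁻¹ = t / (1 - t) + 1 := by field_simp; ring
    _ ≤ Real.exp (t / (1 - t)) := Real.add_one_le_exp _

theorem inv_one_sub_oddOmegaWeight_le_exp {p : ℕ} {c : ℝ} (hp : p.Prime) (hodd : Odd p)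
    (hc : 3 * c ≤ (c - 3) * (p : ℝ) ^ theta) :
    (1 - oddOmegaWeight p)⁻¹ ≤ Real.exp (c / (p : ℝ) ^ theta) := by
  have hlt := oddOmegaWeight_prime_lt_one hp
  refine (inv_one_sub_le_exp hlt).trans (Real.exp_le_exp.2 ?_)
  have hpow : 0 < (p : ℝ) ^ theta := Real.rpow_pos_of_pos (by exact_mod_cast hp.pos) _
  rw [oddOmegaWeight_apply, if_pos hodd, omegaWeight_prime hp] at hlt ⊢
  rw [div_le_div_iff₀ (sub_pos.2 hlt) hpow, div_mul_cancel₀ _ hpow.ne', ← sub_nonneg]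
  have : c * (1 - 3 / (p : ℝ) ^ theta) - 3 =
      ((c - 3) * (p : ℝ) ^ theta - 3 * c) / (p : ℝ) ^ theta := by
    field_simp
    ring
  rw [this]
  exact div_nonneg (sub_nonneg.2 hc) hpow.le

theorem oddEulerProduct_two_mul_succ_le {c : ℝ} {k : ℕ} (hk : k ≠ 1) (hc₀ : 0 ≤ c)
    (hc : 3 * c ≤ (c - 3) * ((2 * k + 1 : ℕ) : ℝ) ^ theta) :
    oddEulerProduct (2 * (k + 1)) ≤
      oddEulerProduct (2 * k) * Real.exp (c / ((2 * k + 1 : ℕ) : ℝ) ^ theta) := by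
  have heven : ¬ (2 * k).Prime := Nat.not_prime_mul (by decide) hk
  rw [show 2 * (k + 1) = 2 * k + 1 + 1 by ring, oddEulerProduct_succ, oddEulerProduct_succ,
    if_neg heven, one_mul, mul_comm]
  refine mul_le_mul_of_nonneg_left ?_ (oddEulerProduct_nonneg _)
  split_ifs with hp
  · exact inv_one_sub_oddOmegaWeight_le_exp hp (odd_two_mul_add_one k) hc
  · exact Real.one_le_exp (by positivity)

/- The sum of `c / (2 * k + 1) ^ theta` is bounded by a telescoping sum, the discrete analogue of
`∫ x ^ (-theta)`. -/
theorem oddEulerProduct_two_mul_le {c : ℝ} {K k : ℕ} (hK : 1 < K) (hKk : K ≤ k) (hc₃ : 3 ≤ c)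
    (hc : 3 * c ≤ (c - 3) * (2 * K : ℝ) ^ theta) :
    oddEulerProduct (2 * k) ≤ oddEulerProduct (2 * K) *
      Real.exp (c / (2 * (theta - 1)) *
        ((2 * K - 1) / (2 * K - 1 : ℝ) ^ theta - (2 * k - 1) / (2 * k - 1 : ℝ) ^ theta)) := by
  have htheta : 0 < theta - 1 := by linarith [theta_lower]
  induction k, hKk using Nat.le_induction with
  | base => simp
  | succ k hKk ih =>
    have hKk' : (K : ℝ) ≤ k := by exact_mod_cast hKk
    have hK' : (1 : ℝ) < K := by exact_mod_cast hK
    have htelescope := sub_one_mul_div_rpow_le_sub (s := theta) (x := 2 * k - 1) (h := 2)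
      (by linarith) (by linarith) zero_le_two
    rw [show (2 * k - 1 + 2 : ℝ) = 2 * k + 1 by ring] at htelescope
    have hexp : c / ((2 * k + 1 : ℕ) : ℝ) ^ theta ≤ c / (2 * (theta - 1)) *
        ((2 * k - 1) / (2 * k - 1 : ℝ) ^ theta - (2 * k + 1) / (2 * k + 1 : ℝ) ^ theta) := by
      calc c / ((2 * k + 1 : ℕ) : ℝ) ^ theta
          = c / (2 * (theta - 1)) * ((theta - 1) * 2 / (2 * k + 1 : ℝ) ^ theta) := by
            push_cast
            field_simp
        _ ≤ _ := by gcongr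
    have hck : 3 * c ≤ (c - 3) * ((2 * k + 1 : ℕ) : ℝ) ^ theta := by
      refine hc.trans (mul_le_mul_of_nonneg_left ?_ (by linarith))
      exact Real.rpow_le_rpow (by positivity) (by push_cast; linarith) theta_pos.le
    have hstep := oddEulerProduct_two_mul_succ_le (by omega) (by linarith) hck
    refine hstep.trans ((mul_le_mul ih (Real.exp_le_exp.2 hexp) (Real.exp_pos _).le
      (mul_nonneg (oddEulerProduct_nonneg _) (Real.exp_pos _).le)).trans_eq ?_)
    rw [mul_assoc, ← Real.exp_add, ← mul_add]
    push_cast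
    ring_nf

theorem oddMass_le_mul_exp {c : ℝ} {K : ℕ} (hK : 1 < K) (hc₃ : 3 ≤ c)
    (hc : 3 * c ≤ (c - 3) * (2 * K : ℝ) ^ theta) (N : ℕ) :
    oddMass N ≤ oddEulerProduct (2 * K) *
      Real.exp (c / (2 * (theta - 1)) * ((2 * K - 1) / (2 * K - 1 : ℝ) ^ theta)) := by
  have htheta : 0 < theta - 1 := by linarith [theta_lower]
  have hbase : (0 : ℝ) ≤ 2 * (K + N : ℕ) - 1 := by
    have : (1 : ℝ) < K := by exact_mod_cast hK
    push_cast
    linarith [N.cast_nonneg (α := ℝ)]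
  calc oddMass N ≤ oddMass (2 * (K + N)) := oddMass_mono (by omega)
    _ ≤ oddEulerProduct (2 * (K + N)) := oddMass_le_oddEulerProduct _
    _ ≤ _ := oddEulerProduct_two_mul_le hK (Nat.le_add_right K N) hc₃ hc
    _ ≤ _ := by
      gcongr
      · exact oddEulerProduct_nonneg _
      · exact sub_le_self _ (div_nonneg hbase (Real.rpow_nonneg hbase _))

/-! ### Odd integers and dyadic intervals -/

/- Each dyadic interval `[N, 2N)` contains exactly one number `2 ^ i * m` for each odd `m < 2N`. -/
@[to_additive sum_Ico_two_mul_eq_sum_odd]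
theorem prod_Ico_two_mul_eq_prod_odd {M : Type*} [CommMonoid M] {g : ℕ → M}
    (hg : ∀ n, g (2 * n) = g n) (N : ℕ) :
    ∏ n ∈ Ico N (2 * N), g n = ∏ m ∈ range (2 * N) with Odd m, g m := by
  induction N with
  | zero => simp
  | succ N ih =>
    have hshift : ∏ n ∈ Ico (N + 1) (2 * N + 1), g n = ∏ n ∈ Ico N (2 * N), g n := by
      rcases N.eq_zero_or_pos with rfl | hN
      · rfl
      · rw [prod_Ico_succ_top (by omega), hg, mul_comm, ← prod_eq_prod_Ico_succ_bot (by omega)]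
    have heven : ¬ Odd (2 * N) := by simp
    rw [show 2 * (N + 1) = 2 * N + 1 + 1 by ring, prod_Ico_succ_top (by omega), hshift, ih,
      prod_filter, prod_filter, prod_range_succ, prod_range_succ, if_neg heven, mul_one,
      if_pos (odd_two_mul_add_one N)]

theorem oddMass_two_mul (N : ℕ) : oddMass (2 * N) = ∑ n ∈ Ico N (2 * N), omegaWeight n := by
  rw [sum_Ico_two_mul_eq_sum_odd omegaWeight_two_mul, sum_filter]
  rfl

/-- The Euler factor at `p` of `oddEulerProduct`, extended to all integers `n = 2 ^ i * p` with
`p` an odd prime and by `1` to the others. -/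
noncomputable def dyadicEulerFactor (n : ℕ) : ℝ :=
  if cardFactors n = n.factorization 2 + 1 then (1 - omegaWeight n)⁻¹ else 1

theorem dyadicEulerFactor_two_mul (n : ℕ) : dyadicEulerFactor (2 * n) = dyadicEulerFactor n := by
  rcases eq_or_ne n 0 with rfl | hn
  · rfl
  rw [dyadicEulerFactor, dyadicEulerFactor, omegaWeight_two_mul, cardFactors_two_mul hn,
    Nat.factorization_mul two_ne_zero hn, Nat.prime_two.factorization]
  simp [add_comm]

theorem oddEulerProduct_two_mul (N : ℕ) :
    oddEulerProduct (2 * N) = ∏ n ∈ Ico N (2 * N), dyadicEulerFactor n := by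
  rw [prod_Ico_two_mul_eq_prod_odd dyadicEulerFactor_two_mul, oddEulerProduct,
    Nat.primesBelow_eq_filter_range, prod_filter, prod_filter]
  refine prod_congr rfl fun m _ ↦ ?_
  rw [oddOmegaWeight_apply]
  by_cases hodd : Odd m
  · have h2 : m.factorization 2 = 0 := Nat.factorization_eq_zero_of_not_dvd hodd.not_two_dvd_nat
    rw [if_pos hodd, if_pos hodd, dyadicEulerFactor, h2, zero_add]
    simp only [cardFactors_eq_one_iff_prime]
  · simp [hodd]

/-! ### Counting prime factors by trial division -/

theorem pow_cardFactors_le {B m : ℕ} (hm : m ≠ 0) (hB : ∀ q, q.Prime → q ∣ m → B ≤ q) :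
    B ^ cardFactors m ≤ m := by
  rw [cardFactors_apply]
  calc B ^ m.primeFactorsList.length ≤ m.primeFactorsList.prod :=
        List.pow_card_le_prod _ _ fun q hq ↦
          hB q (Nat.prime_of_mem_primeFactorsList hq) (Nat.dvd_of_mem_primeFactorsList hq)
    _ = m := Nat.prod_primeFactorsList hm

theorem cardFactors_lt_of_lt_pow {B m k : ℕ} (hB₁ : 1 < B) (hm : m ≠ 0)
    (hB : ∀ q, q.Prime → q ∣ m → B ≤ q) (hlt : m < B ^ k) : cardFactors m < k :=
  (Nat.pow_lt_pow_iff_right hB₁).1 ((pow_cardFactors_le hm hB).trans_lt hlt)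

theorem cardFactors_eq_factorization_add {p n : ℕ} (hp : p.Prime) (hn : n ≠ 0) :
    cardFactors n = n.factorization p + cardFactors (ordCompl[p] n) := by
  conv_lhs => rw [← Nat.ordProj_mul_ordCompl_eq_self n p]
  rw [cardFactors_mul (Nat.ordProj_pos n p).ne' (Nat.ordCompl_pos p hn).ne',
    cardFactors_apply_prime_pow hp]

/-- Divides `n` by `p` as long as possible, at most `fuel` times, and adds the number of divisions
to the value of `k` at the remaining quotient. It is written with bare recursors because it is
meant to be evaluated by the kernel, which reduces these fastest. -/
noncomputable def divideOut (fuel p : ℕ) (k : ℕ → ℕ) : ℕ → ℕ :=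
  fuel.rec k fun _ ih n ↦ (n.mod p).casesOn (ih (n.div p)).succ fun _ ↦ k n

theorem divideOut_succ (fuel p : ℕ) (k : ℕ → ℕ) (n : ℕ) :
    divideOut (fuel + 1) p k n = if p ∣ n then divideOut fuel p k (n / p) + 1 else k n := by
  have hrec : divideOut (fuel + 1) p k n =
      (n % p).casesOn (divideOut fuel p k (n / p) + 1) fun _ ↦ k n := rfl
  simp only [hrec, Nat.dvd_iff_mod_eq_zero]
  cases n % p <;> rfl

theorem divideOut_eq {p : ℕ} (hp : p.Prime) (k : ℕ → ℕ) {fuel n : ℕ} (hn : n ≠ 0)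
    (hlt : n < 2 ^ fuel) : divideOut fuel p k n = n.factorization p + k (ordCompl[p] n) := by
  induction fuel generalizing n with
  | zero => omega
  | succ fuel ih =>
    rw [divideOut_succ]
    split_ifs with hdvd
    · obtain ⟨m, rfl⟩ := hdvd
      have hm : m ≠ 0 := right_ne_zero_of_mul hn
      have hlt' : m < 2 ^ fuel := by
        have := Nat.mul_le_mul_right m hp.two_le
        omega
      have hcompl : ordCompl[p] (p * m) = ordCompl[p] m := by
        simpa using Nat.ordCompl_self_pow_mul m 1 hp
      rw [hcompl, Nat.mul_div_cancel_left _ hp.pos, ih hm hlt',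
        Nat.factorization_mul hp.ne_zero hm, hp.factorization]
      simp only [Finsupp.add_apply, Finsupp.single_eq_same]
      ring
    · rw [Nat.factorization_eq_zero_of_not_dvd hdvd]
      simp

/-- `k` computes `Ω` at all positive integers up to `2 ^ 16` without a prime factor below `B`. -/
def ComputesOmega (B : ℕ) (k : ℕ → ℕ) : Prop :=
  ∀ m, m ≠ 0 → m ≤ 2 ^ 16 → (∀ q, q.Prime → q ∣ m → B ≤ q) → k m = cardFactors m

theorem ComputesOmega.divideOut {p B : ℕ} {k : ℕ → ℕ} (hk : ComputesOmega B k) (hp : p.Prime)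
    (hgap : ∀ q ∈ Ioo p B, ¬ q.Prime) : ComputesOmega p (divideOut 17 p k) := by
  intro m hm hm16 hrough
  rw [divideOut_eq hp k hm (by omega), cardFactors_eq_factorization_add hp hm]
  refine congrArg _ (hk _ (Nat.ordCompl_pos p hm).ne' ((Nat.ordCompl_le m p).trans hm16) ?_)
  intro q hq hdvd
  by_contra! hlt'
  have hne : q ≠ p := by
    rintro rfl
    exact Nat.not_dvd_ordCompl hp hm hdvd
  have hle : p ≤ q := hrough q hq (hdvd.trans (Nat.ordCompl_dvd m p))
  exact hgap q (mem_Ioo.2 ⟨hle.lt_of_ne' hne, hlt'⟩) hq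

/-- The value of `Ω` at those `m ≤ 2 ^ 16` all of whose prime factors are at least `41`; these have
at most two prime factors. -/
noncomputable def cardFactorsOfRough (m : ℕ) : ℕ :=
  bif m.beq 1 then 0 else bif m.ble 256 || (m.gcd (Nat.factorial 256)).beq 1 then 1 else 2

theorem cardFactorsOfRough_eq (m : ℕ) :
    cardFactorsOfRough m =
      if m = 1 then 0 else if m ≤ 256 ∨ m.Coprime (Nat.factorial 256) then 1 else 2 := by
  simp only [cardFactorsOfRough, Bool.cond_eq_ite, Bool.or_eq_true, Nat.beq_eq, Nat.ble_eq,
    Nat.Coprime]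

theorem computesOmega_cardFactorsOfRough : ComputesOmega 41 cardFactorsOfRough := by
  intro m hm hm16 hrough
  rw [cardFactorsOfRough_eq]
  rcases eq_or_ne m 1 with rfl | hm1
  · simp
  have hpos : 0 < cardFactors m := cardFactors_pos_iff_one_lt.2 (by omega)
  rw [if_neg hm1]
  split_ifs with h
  · suffices cardFactors m < 2 by omega
    rcases h with hle | hcop
    · exact cardFactors_lt_of_lt_pow (by norm_num) hm hrough (by omega)
    · refine cardFactors_lt_of_lt_pow (B := 257) (by norm_num) hm (fun q hq hdvd ↦ ?_) (by omega)
      by_contra! hqlt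
      have hfactorial : q ∣ Nat.factorial 256 := Nat.dvd_factorial hq.pos (by omega)
      exact hq.one_lt.ne' (Nat.eq_one_of_dvd_coprimes hcop hdvd hfactorial)
  · have hle : cardFactors m < 3 :=
      cardFactors_lt_of_lt_pow (by norm_num) hm hrough (by omega)
    have hnot : cardFactors m ≠ 1 := by
      rw [Ne, cardFactors_eq_one_iff_prime]
      intro hprime
      exact h (or_iff_not_imp_left.2 fun hgt ↦ hprime.coprime_factorial_of_lt (not_le.1 hgt))
    omega

/-- `Ω` up to `2 ^ 16`, by trial division by the primes up to `37`. -/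
noncomputable def trialCardFactors : ℕ → ℕ :=
  divideOut 17 2 <| divideOut 17 3 <| divideOut 17 5 <| divideOut 17 7 <| divideOut 17 11 <|
    divideOut 17 13 <| divideOut 17 17 <| divideOut 17 19 <| divideOut 17 23 <|
    divideOut 17 29 <| divideOut 17 31 <| divideOut 17 37 cardFactorsOfRough

theorem trialCardFactors_eq {n : ℕ} (hn : n ≠ 0) (hle : n ≤ 2 ^ 16) :
    trialCardFactors n = cardFactors n := by
  have h37 := computesOmega_cardFactorsOfRough.divideOut (p := 37) (by norm_num) (by decide)
  have h31 := h37.divideOut (p := 31) (by norm_num) (by decide)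
  have h29 := h31.divideOut (p := 29) (by norm_num) (by decide)
  have h23 := h29.divideOut (p := 23) (by norm_num) (by decide)
  have h19 := h23.divideOut (p := 19) (by norm_num) (by decide)
  have h17 := h19.divideOut (p := 17) (by norm_num) (by decide)
  have h13 := h17.divideOut (p := 13) (by norm_num) (by decide)
  have h11 := h13.divideOut (p := 11) (by norm_num) (by decide)
  have h7 := h11.divideOut (p := 7) (by norm_num) (by decide)
  have h5 := h7.divideOut (p := 5) (by norm_num) (by decide)
  have h3 := h5.divideOut (p := 3) (by norm_num) (by decide)
  have h2 := h3.divideOut (p := 2) (by norm_num) (by decide)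
  exact h2 n hn hle fun q hq _ ↦ hq.two_le

/-! ### Kernel computation over a range of integers -/

/-- `k n`, arranged so that the kernel evaluates `n` to a numeral before substituting it. -/
def force {α : Type*} (n : ℕ) (k : ℕ → α) : α :=
  n.casesOn (k 0) fun m ↦ k m.succ

theorem force_eq {α : Type*} (n : ℕ) (k : ℕ → α) : force n k = k n := by
  cases n <;> rfl

/-- `if Even m then x else y`, written with a bare recursor for fast kernel evaluation. -/
def ifEven {α : Type*} (m : ℕ) (x y : α) : α :=
  (m.mod 2).casesOn x fun _ ↦ y

theorem ifEven_eq {α : Type*} (m : ℕ) (x y : α) : ifEven m x y = if Even m then x else y := by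
  have hrec : ifEven m x y = (m % 2).casesOn x fun _ ↦ y := rfl
  simp only [hrec, Nat.even_iff]
  cases m % 2 <;> rfl

/-- Runs `step` at `n, n + 1, …, n + 2 ^ k - 1`, threading the state `s` through and failing as soon
as one step fails. The recursion bisects the range to keep its depth logarithmic. -/
def sweep {σ : Type*} (step : ℕ → σ → Option σ) : ℕ → ℕ → σ → Option σ
  | 0, n, s => step n s
  | k + 1, n, s =>
    match sweep step k n s with
    | none => none
    | some s' => force (n.add (Nat.pow 2 k)) fun n' ↦ sweep step k n' s'

theorem sweep_invariant {σ : Type*} {step : ℕ → σ → Option σ} {Inv : ℕ → σ → Prop} {N : ℕ}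
    (hstep : ∀ n s s', n < N → Inv n s → step n s = some s' → Inv (n + 1) s')
    {k n : ℕ} {s s' : σ} (hN : n + 2 ^ k ≤ N) (hInv : Inv n s)
    (hsweep : sweep step k n s = some s') : Inv (n + 2 ^ k) s' := by
  induction k generalizing n s s' with
  | zero => exact hstep n s s' (by simpa using hN) hInv hsweep
  | succ k ih =>
    have hdouble : 2 ^ (k + 1) = 2 ^ k + 2 ^ k := by ring
    rw [hdouble, ← add_assoc] at hN ⊢
    rw [sweep] at hsweep
    split at hsweep
    case h_1 => contradiction
    case h_2 s₁ hleft =>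
      rw [force_eq] at hsweep
      exact ih hN (ih ((Nat.le_add_right _ _).trans hN) hInv hleft) hsweep

/-! ### The dyadic sums up to `2 ^ 16` -/

/-- An integer below `1.09 * 3 ^ 16 * (1 + 1.5 * (n / 2 ^ 15 - 1))` for `n ≥ 2 ^ 15`. -/
def windowBound (n : ℕ) : ℕ :=
  (Nat.mul 2147 (n.sub 32768)).add 46920925

/-- Advances a representation `3 * dyadicWa 3 n = a - b` from `n` to `n + 1`, provided that
`|a - b| ≤ windowBound n`. -/
noncomputable def dyadicWaStep (n : ℕ) : ℕ × ℕ → Option (ℕ × ℕ)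
  | (a, b) =>
    bif a.ble (b.add (windowBound n)) && b.ble (a.add (windowBound n)) then
      force (trialCardFactors n.succ) fun w ↦
        force ((ifEven n.succ 4 3).mul (Nat.pow 3 w)) fun t ↦
          ifEven w (force (a.add t) fun a' ↦ some (a', b)) (force (b.add t) fun b' ↦ some (a, b'))
    else none

/-- The pair `s` represents `3 * dyadicWa 3 n`, and `windowBound` is a valid bound below `n`. -/
def DyadicWaInvariant (n : ℕ) (s : ℕ × ℕ) : Prop :=
  3 * dyadicWa 3 n = s.1 - s.2 ∧ ∀ m < n, |3 * dyadicWa 3 m| ≤ windowBound m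

theorem dyadicWaStep_invariant (n : ℕ) (s s' : ℕ × ℕ) (hn : n < 2 ^ 16)
    (hInv : DyadicWaInvariant n s) (hstep : dyadicWaStep n s = some s') :
    DyadicWaInvariant (n + 1) s' := by
  obtain ⟨a, b⟩ := s
  obtain ⟨hval, hbound⟩ := hInv
  simp only [dyadicWaStep, force_eq, ifEven_eq, trialCardFactors_eq n.succ_ne_zero hn,
    Bool.cond_eq_ite, Bool.and_eq_true, Nat.ble_eq] at hstep
  obtain ⟨⟨hab, hba⟩, hs'⟩ := Option.ite_none_right_eq_some.1 hstep
  refine ⟨?_, fun m hm ↦ ?_⟩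
  · have ht : (((if Even (n + 1) then 4 else 3) * 3 ^ cardFactors (n + 1) : ℕ) : ℝ) =
        (if Even (n + 1) then 3 + 1 else 3) * 3 ^ cardFactors (n + 1) := by
      push_cast
      norm_num
    rw [mul_dyadicWa_succ, hval]
    by_cases hw : Even (cardFactors (n + 1))
    · rw [if_pos hw, Option.some.injEq] at hs'
      simp only [← hs', Nat.add_eq, Nat.mul_eq, Nat.pow_eq, Nat.succ_eq_add_one, Nat.cast_add, ht,
        hw.neg_pow]
      ring
    · rw [if_neg hw, Option.some.injEq] at hs'
      simp only [← hs', Nat.add_eq, Nat.mul_eq, Nat.pow_eq, Nat.succ_eq_add_one, Nat.cast_add, ht,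
        (Nat.not_even_iff_odd.1 hw).neg_pow]
      ring
  · rcases Nat.lt_succ_iff_lt_or_eq.1 hm with hlt | rfl
    · exact hbound m hlt
    · have hab' : (a : ℝ) ≤ b + windowBound m := by exact_mod_cast hab
      have hba' : (b : ℝ) ≤ a + windowBound m := by exact_mod_cast hba
      rw [hval, abs_le]
      constructor <;> linarith

theorem sweep_dyadicWaStep_zero :
    sweep dyadicWaStep 15 0 (0, 0) = some (107934321, 154392285) := by
  decide +kernel

theorem isSome_sweep_dyadicWaStep :
    (sweep dyadicWaStep 15 (2 ^ 15) (107934321, 154392285)).isSome := by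
  decide +kernel

theorem dyadicWaInvariant_two_pow_fifteen : DyadicWaInvariant (2 ^ 15) (107934321, 154392285) := by
  have hzero : DyadicWaInvariant 0 (0, 0) := by simp [DyadicWaInvariant, dyadicWa]
  simpa using sweep_invariant dyadicWaStep_invariant (by norm_num) hzero sweep_dyadicWaStep_zero

theorem dyadicWa_two_pow_fifteen : dyadicWa 3 (2 ^ 15) = -15485988 := by
  have h := dyadicWaInvariant_two_pow_fifteen.1
  norm_num at h ⊢
  linarith

theorem abs_dyadicWa_le_windowBound {n : ℕ} (hn : n < 2 ^ 16) :
    |3 * dyadicWa 3 n| ≤ windowBound n := by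
  obtain ⟨s, hs⟩ := Option.isSome_iff_exists.1 isSome_sweep_dyadicWaStep
  have hInv : DyadicWaInvariant (2 ^ 15 + 2 ^ 15) s :=
    sweep_invariant dyadicWaStep_invariant (by norm_num) dyadicWaInvariant_two_pow_fifteen hs
  exact hInv.2 n hn

theorem natCast_windowBound_add (h : ℕ) : (windowBound (2 ^ 15 + h) : ℝ) = 2147 * h + 46920925 := by
  have hdef : windowBound (2 ^ 15 + h) = 2147 * (2 ^ 15 + h - 2 ^ 15) + 46920925 := rfl
  rw [hdef, Nat.add_sub_cancel_left, Nat.cast_add, Nat.cast_mul]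
  norm_num

theorem abs_dyadicWa_le_of_mem_window {n : ℕ} (hn : 2 ^ 15 ≤ n) (hn' : n < 2 ^ 16) :
    |dyadicWa 3 n| ≤ 1.09 * (n : ℝ) ^ theta := by
  obtain ⟨h, rfl⟩ := Nat.exists_eq_add_of_le hn
  have hbernoulli := rpow_mul_one_add_mul_div_le_add_rpow (s := theta) (x := 2 ^ 15) (h := h)
    (by linarith [theta_lower]) (by positivity) (by linarith [h.cast_nonneg (α := ℝ)])
  have hgrowth : 3 ^ 15 * (1 + 1.584 * (h / 2 ^ 15)) ≤ ((2 ^ 15 + h : ℕ) : ℝ) ^ theta := by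
    rw [Nat.cast_add, Nat.cast_pow, Nat.cast_ofNat]
    refine le_trans ?_ hbernoulli
    rw [two_pow_rpow_theta]
    gcongr
    exact theta_lower
  have hbound := abs_dyadicWa_le_windowBound hn'
  rw [natCast_windowBound_add, abs_mul, abs_of_pos three_pos] at hbound
  calc |dyadicWa 3 (2 ^ 15 + h)| ≤ (2147 * h + 46920925) / 3 := by rwa [le_div_iff₀' three_pos]
    _ ≤ 1.09 * (3 ^ 15 * (1 + 1.584 * (h / 2 ^ 15))) := by linarith [h.cast_nonneg (α := ℝ)]
    _ ≤ 1.09 * ((2 ^ 15 + h : ℕ) : ℝ) ^ theta := by gcongr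

/-! ### The odd mass and the odd Euler product below `2 ^ 15` -/

theorem natCast_div_le_cast_div_succ (m d : ℕ) : (m : ℝ) / d ≤ (m / d).succ := by
  rw [← Nat.floor_div_eq_div (K := ℝ), Nat.cast_succ]
  exact (Nat.lt_floor_add_one _).le

/-- Turns an integer upper bound for `1000 * n ^ theta` into one for `1000 * (n + 1) ^ theta`. -/
def nextUpper (n hi : ℕ) : ℕ :=
  hi.add ((hi.mul 15851).div ((n.mul 10000).sub 5851)).succ

/-- Turns an integer lower bound for `1000 * n ^ theta` into one for `1000 * (n + 1) ^ theta`. -/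
def nextLower (n lo : ℕ) : ℕ :=
  lo.add ((lo.mul 1584).div (n.mul 1000))

theorem le_nextUpper {n hi : ℕ} (hn : 0 < n) (hhi : 1000 * (n : ℝ) ^ theta ≤ hi) :
    1000 * ((n + 1 : ℕ) : ℝ) ^ theta ≤ nextUpper n hi := by
  have hn' : (1 : ℝ) ≤ n := by exact_mod_cast hn
  have hden : (0 : ℝ) < 10000 * n - 5851 := by linarith
  have hbernoulli := rpow_mul_one_add_mul_div_le_add_rpow (s := theta) (x := n + 1) (h := -1)
    (by linarith [theta_lower]) (by linarith) (by linarith)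
  rw [add_neg_cancel_right] at hbernoulli
  have hfactor : (10000 * n - 5851) / (10000 * n + 10000) ≤ 1 + theta * (-1 / (n + 1 : ℝ)) := by
    rw [div_le_iff₀ (by linarith)]
    calc (10000 * n - 5851 : ℝ) ≤ 10000 * (n + 1) - 10000 * theta := by linarith [theta_upper]
      _ = (1 + theta * (-1 / (n + 1 : ℝ))) * (10000 * n + 10000) := by
        field_simp
        ring
  calc 1000 * ((n + 1 : ℕ) : ℝ) ^ theta
      ≤ 1000 * ((n : ℝ) ^ theta * ((10000 * n + 10000) / (10000 * n - 5851))) := by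
        rw [← inv_div (10000 * n - 5851 : ℝ), ← div_eq_mul_inv]
        gcongr
        rw [le_div_iff₀ (div_pos hden (by positivity))]
        push_cast
        exact (mul_le_mul_of_nonneg_left hfactor (by positivity)).trans hbernoulli
    _ ≤ hi * ((10000 * n + 10000) / (10000 * n - 5851)) := by
        rw [← mul_assoc]
        gcongr
    _ = hi + (hi * 15851 : ℕ) / (n * 10000 - 5851 : ℕ) := by
        rw [Nat.cast_sub (by omega)]
        push_cast
        field_simp
        ring
    _ ≤ hi + (hi * 15851 / (n * 10000 - 5851)).succ := by
        gcongr
        exact natCast_div_le_cast_div_succ _ _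
    _ = nextUpper n hi := by
        rw [← Nat.cast_add]
        rfl

theorem nextLower_le {n lo : ℕ} (hn : 0 < n) (hlo : lo ≤ 1000 * (n : ℝ) ^ theta) :
    nextLower n lo ≤ 1000 * ((n + 1 : ℕ) : ℝ) ^ theta := by
  have hn' : (0 : ℝ) < n := by exact_mod_cast hn
  have hbernoulli := rpow_mul_one_add_mul_div_le_add_rpow (s := theta) (x := n) (h := 1)
    (by linarith [theta_lower]) hn' (by linarith)
  calc (nextLower n lo : ℝ) = lo + (lo * 1584 / (n * 1000) : ℕ) := by
        rw [← Nat.cast_add]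
        rfl
    _ ≤ lo + (lo * 1584 : ℕ) / (n * 1000 : ℕ) := by
        gcongr
        exact Nat.cast_div_le
    _ = lo * (1 + 1.584 * (1 / n)) := by
        push_cast
        field_simp
        ring
    _ ≤ 1000 * (n : ℝ) ^ theta * (1 + theta * (1 / n)) := by
        gcongr
        exact theta_lower
    _ ≤ 1000 * ((n + 1 : ℕ) : ℝ) ^ theta := by
        rw [mul_assoc]
        push_cast
        gcongr

/-- Advances the state `(hi, lo, c, e)` from `n` to `n + 1`, where `lo ≤ 1000 * n ^ theta ≤ hi` and
`c`, `e` are bounds for partial sums of `omegaWeight` and partial products of `dyadicEulerFactor`,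
both scaled by `10 ^ 9`. The outer test recognises the `n = 2 ^ i * p` with `p` an odd prime,
where `divideOut` gives `i + 1`. The step fails if `lo` is too small to bound the Euler factor. -/
noncomputable def weightStep (n : ℕ) : ℕ × ℕ × ℕ × ℕ → Option (ℕ × ℕ × ℕ × ℕ)
  | (hi, lo, c, e) =>
    force (trialCardFactors n) fun w ↦ force (Nat.mul 1000 (Nat.pow 3 w)) fun t ↦
      force (c.add ((t.mul 1000000000).div hi)) fun c' ↦
        force (nextUpper n hi) fun hi' ↦ force (nextLower n lo) fun lo' ↦
          bif w.beq (divideOut 17 2 (fun _ ↦ 1) n) then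
            bif t.blt lo then
              force ((e.mul lo).div (lo.sub t)).succ fun e' ↦ some (hi', lo', c', e')
            else none
          else some (hi', lo', c', e)

/-- The state `s = (hi, lo, c, e)` consists of valid bounds for `n ^ theta` and for the sum and the
product over `[2 ^ 14, n)`. -/
structure WeightInvariant (n : ℕ) (s : ℕ × ℕ × ℕ × ℕ) : Prop where
  start_le : 2 ^ 14 ≤ n
  le_upper : 1000 * (n : ℝ) ^ theta ≤ s.1
  lower_le : s.2.1 ≤ 1000 * (n : ℝ) ^ theta
  mass_le : s.2.2.1 ≤ 10 ^ 9 * ∑ m ∈ Ico (2 ^ 14) n, omegaWeight m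
  le_euler : 10 ^ 9 * ∏ m ∈ Ico (2 ^ 14) n, dyadicEulerFactor m ≤ s.2.2.2

theorem natCast_div_le_omegaWeight {n hi : ℕ} (hn : 0 < n) (hhi : 1000 * (n : ℝ) ^ theta ≤ hi) :
    ((1000 * 3 ^ cardFactors n * 1000000000 / hi : ℕ) : ℝ) ≤ 10 ^ 9 * omegaWeight n := by
  calc ((1000 * 3 ^ cardFactors n * 1000000000 / hi : ℕ) : ℝ)
      ≤ (1000 * 3 ^ cardFactors n * 1000000000 : ℕ) / hi := Nat.cast_div_le
    _ ≤ (1000 * 3 ^ cardFactors n * 1000000000 : ℕ) / (1000 * (n : ℝ) ^ theta) := by gcongr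
    _ = 10 ^ 9 * omegaWeight n := by
        rw [omegaWeight_apply]
        push_cast
        field_simp
        norm_num

theorem mul_inv_one_sub_omegaWeight_le {n lo e : ℕ} {P : ℝ}
    (hlo : lo ≤ 1000 * (n : ℝ) ^ theta) (hlt : 1000 * 3 ^ cardFactors n < lo) (hP : P ≤ e) :
    P * (1 - omegaWeight n)⁻¹ ≤ (e * lo / (lo - 1000 * 3 ^ cardFactors n)).succ := by
  have hlt' : (1000 * 3 ^ cardFactors n : ℝ) < lo := by exact_mod_cast hlt
  have hlo₀ : (0 : ℝ) < lo := lt_trans (by positivity) hlt'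
  have hweight : omegaWeight n ≤ 1000 * 3 ^ cardFactors n / lo := by
    calc omegaWeight n = 1000 * 3 ^ cardFactors n / (1000 * (n : ℝ) ^ theta) := by
          rw [omegaWeight_apply, mul_div_mul_left _ _ (by norm_num)]
      _ ≤ 1000 * 3 ^ cardFactors n / lo := by gcongr
  have hratio : 1000 * 3 ^ cardFactors n / (lo : ℝ) < 1 := (div_lt_one hlo₀).2 hlt'
  calc P * (1 - omegaWeight n)⁻¹
      ≤ e * (1 - 1000 * 3 ^ cardFactors n / (lo : ℝ))⁻¹ := by
        have hpos : 0 < 1 - 1000 * 3 ^ cardFactors n / (lo : ℝ) := sub_pos.2 hratio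
        have : 0 < 1 - omegaWeight n := hpos.trans_le (sub_le_sub_left hweight 1)
        gcongr
    _ = (e * lo : ℕ) / (lo - 1000 * 3 ^ cardFactors n : ℕ) := by
        have : 0 < (lo : ℝ) - 1000 * 3 ^ cardFactors n := sub_pos.2 hlt'
        rw [Nat.cast_sub hlt.le]
        push_cast
        field_simp
    _ ≤ _ := natCast_div_le_cast_div_succ _ _

theorem weightStep_invariant (n : ℕ) (s s' : ℕ × ℕ × ℕ × ℕ) (hn : n < 2 ^ 15)
    (hInv : WeightInvariant n s) (hstep : weightStep n s = some s') :
    WeightInvariant (n + 1) s' := by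
  obtain ⟨hi, lo, c, e⟩ := s
  obtain ⟨hstart, hhi, hlo, hc, he⟩ := hInv
  have hn₀ : 0 < n := by omega
  simp only [weightStep, force_eq, trialCardFactors_eq hn₀.ne' (by omega),
    divideOut_eq Nat.prime_two _ hn₀.ne' (by omega : n < 2 ^ 17),
    Bool.cond_eq_ite, Nat.beq_eq, Nat.blt_eq] at hstep
  have hmass : ((c + 1000 * 3 ^ cardFactors n * 1000000000 / hi : ℕ) : ℝ) ≤
      10 ^ 9 * ∑ m ∈ Ico (2 ^ 14) (n + 1), omegaWeight m := by
    rw [sum_Ico_succ_top hstart, mul_add, Nat.cast_add]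
    exact add_le_add hc (natCast_div_le_omegaWeight hn₀ hhi)
  have hfactor : ∏ m ∈ Ico (2 ^ 14) (n + 1), dyadicEulerFactor m =
      (∏ m ∈ Ico (2 ^ 14) n, dyadicEulerFactor m) *
        if cardFactors n = n.factorization 2 + 1 then (1 - omegaWeight n)⁻¹ else 1 :=
    prod_Ico_succ_top hstart _
  split_ifs at hstep hfactor with hprime hlt
  · obtain rfl := Option.some.inj hstep
    refine ⟨hstart.trans n.le_succ, le_nextUpper hn₀ hhi, nextLower_le hn₀ hlo, hmass, ?_⟩
    rw [hfactor, ← mul_assoc]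
    exact mul_inv_one_sub_omegaWeight_le hlo hlt he
  · obtain rfl := Option.some.inj hstep
    refine ⟨hstart.trans n.le_succ, le_nextUpper hn₀ hhi, nextLower_le hn₀ hlo, hmass, ?_⟩
    rwa [hfactor, mul_one]

theorem sweep_weightStep :
    sweep weightStep 14 (2 ^ 14) (4782969000, 4782969000, 0, 1000000000) =
      some (14350491569, 14339120874, 4421448009, 4570833840) := by
  decide +kernel

theorem weightInvariant_two_pow_fifteen :
    WeightInvariant (2 ^ 15) (14350491569, 14339120874, 4421448009, 4570833840) := by
  have hpow : 1000 * ((2 ^ 14 : ℕ) : ℝ) ^ theta = 4782969000 := by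
    rw [Nat.cast_pow, Nat.cast_ofNat, two_pow_rpow_theta]
    norm_num
  have hstart : WeightInvariant (2 ^ 14) (4782969000, 4782969000, 0, 1000000000) :=
    ⟨le_rfl, hpow.le, hpow.ge, by simp, by norm_num⟩
  exact sweep_invariant weightStep_invariant (by norm_num) hstart sweep_weightStep

theorem le_oddMass_two_pow_fifteen : 4.42 ≤ oddMass (2 ^ 15) := by
  have h := weightInvariant_two_pow_fifteen.mass_le
  rw [pow_succ' 2 14, ← oddMass_two_mul] at h
  norm_num at h ⊢
  linarith

theorem oddEulerProduct_two_pow_fifteen_le : oddEulerProduct (2 ^ 15) ≤ 4.571 := by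
  have h := weightInvariant_two_pow_fifteen.le_euler
  rw [pow_succ' 2 14, ← oddEulerProduct_two_mul] at h
  norm_num at h ⊢
  linarith

/-! ### Asymptotics -/

theorem div_two_mul_theta_sub_one_mul_le {t : ℝ} (ht : t ≤ 2 ^ 14 / 3 ^ 14) :
    3.003 / (2 * (theta - 1)) * t ≤ 0.009 := by
  have htheta : 0 < theta - 1 := by linarith [theta_lower]
  calc 3.003 / (2 * (theta - 1)) * t ≤ 3.003 / (2 * (theta - 1)) * (2 ^ 14 / 3 ^ 14) := by gcongr
    _ ≤ 3.003 / (2 * (1.584 - 1)) * (2 ^ 14 / 3 ^ 14) := by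
        gcongr
        all_goals linarith [theta_lower]
    _ ≤ 0.009 := by norm_num

theorem oddMass_le (N : ℕ) : oddMass N ≤ 4.62 := by
  have hpow : ((2 : ℝ) * (2 ^ 14 : ℕ)) ^ theta = 3 ^ 15 := by
    rw [Nat.cast_pow, Nat.cast_ofNat, ← pow_succ', two_pow_rpow_theta]
  have hmass := oddMass_le_mul_exp (c := 3.003) (K := 2 ^ 14) (by norm_num) (by norm_num)
    (by rw [hpow]; norm_num) N
  have hstart : (2 * (2 ^ 14 : ℕ) - 1) / (2 * (2 ^ 14 : ℕ) - 1 : ℝ) ^ theta ≤ 2 ^ 14 / 3 ^ 14 := by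
    rw [← two_pow_rpow_theta]
    exact div_rpow_le_div_rpow (by linarith [theta_lower]) (by norm_num) (by norm_num)
  calc oddMass N ≤ _ := hmass
    _ ≤ 4.571 * Real.exp 0.009 := by
        rw [← pow_succ']
        exact mul_le_mul oddEulerProduct_two_pow_fifteen_le
          (Real.exp_le_exp.2 (div_two_mul_theta_sub_one_mul_le hstart)) (Real.exp_pos _).le
          (by norm_num)
    _ ≤ 4.571 * (1 / (1 - 0.009)) := by
        gcongr
        exact Real.exp_bound_div_one_sub_of_interval (by norm_num) (by norm_num)
    _ ≤ 4.62 := by norm_num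

theorem exists_div_two_pow_mem_Ico {K N : ℕ} (hK : 0 < K) (hN : K ≤ N) :
    ∃ j, N / 2 ^ j ∈ Set.Ico K (2 * K) := by
  induction N using Nat.strong_induction_on with
  | _ N ih =>
    rcases lt_or_ge N (2 * K) with hlt | hge
    · exact ⟨0, by simpa using ⟨hN, hlt⟩⟩
    · obtain ⟨j, hj⟩ := ih (N / 2) (by omega) (by omega)
      refine ⟨j + 1, ?_⟩
      rwa [pow_succ', ← Nat.div_div_eq_div_mul]

theorem abs_dyadicWa_sub_le_of_le_div {N j : ℕ} (hj : 2 ^ 15 ≤ N / 2 ^ j) :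
    |dyadicWa 3 N - (-3) ^ j * dyadicWa 3 (N / 2 ^ j)| ≤ 0.2 * (N : ℝ) ^ theta := by
  have hmass : 4.42 ≤ oddMass (N / 2 ^ j + 1) :=
    le_oddMass_two_pow_fifteen.trans (oddMass_mono (by omega))
  calc |dyadicWa 3 N - (-3) ^ j * dyadicWa 3 (N / 2 ^ j)|
      ≤ (N : ℝ) ^ theta * (oddMass (N + 1) - oddMass (N / 2 ^ j + 1)) := abs_dyadicWa_sub_le N j
    _ ≤ (N : ℝ) ^ theta * 0.2 := by
        gcongr
        linarith [oddMass_le (N + 1)]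
    _ = 0.2 * (N : ℝ) ^ theta := mul_comm _ _

theorem abs_dyadicWa_le {N : ℕ} (hN : 2 ^ 15 ≤ N) : |dyadicWa 3 N| ≤ 1.29 * (N : ℝ) ^ theta := by
  obtain ⟨j, hj, hj'⟩ := exists_div_two_pow_mem_Ico (by norm_num) hN
  have hmain : |(-3 : ℝ) ^ j * dyadicWa 3 (N / 2 ^ j)| ≤ 1.09 * (N : ℝ) ^ theta := by
    rw [abs_mul, abs_pow, abs_neg, abs_of_pos three_pos]
    calc 3 ^ j * |dyadicWa 3 (N / 2 ^ j)|
        ≤ 3 ^ j * (1.09 * ((N / 2 ^ j : ℕ) : ℝ) ^ theta) := by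
          gcongr
          exact abs_dyadicWa_le_of_mem_window hj hj'
      _ = 1.09 * (3 ^ j * ((N / 2 ^ j : ℕ) : ℝ) ^ theta) := mul_left_comm _ _ _
      _ ≤ 1.09 * (N : ℝ) ^ theta := by
          gcongr
          exact three_pow_mul_div_rpow_le N j
  linarith [abs_dyadicWa_sub_le_of_le_div hj,
    abs_sub_abs_le_abs_sub (dyadicWa 3 N) ((-3) ^ j * dyadicWa 3 (N / 2 ^ j))]

theorem le_abs_dyadicWa_two_pow (j : ℕ) :
    0.879 * ((2 ^ (j + 15) : ℕ) : ℝ) ^ theta ≤ |dyadicWa 3 (2 ^ (j + 15))| := by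
  have hdiv : 2 ^ (j + 15) / 2 ^ j = 2 ^ 15 := by
    rw [pow_add, Nat.mul_div_cancel_left _ (by positivity)]
  have herror := abs_dyadicWa_sub_le_of_le_div hdiv.ge
  have hmain : |(-3 : ℝ) ^ j * dyadicWa 3 (2 ^ 15)| = 3 ^ j * 15485988 := by
    rw [abs_mul, abs_pow, abs_neg, abs_of_pos three_pos, dyadicWa_two_pow_fifteen]
    norm_num
  have htriangle := abs_sub_abs_le_abs_sub ((-3 : ℝ) ^ j * dyadicWa 3 (2 ^ 15))
    (dyadicWa 3 (2 ^ (j + 15)))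
  rw [abs_sub_comm, hmain] at htriangle
  have hpow : ((2 ^ (j + 15) : ℕ) : ℝ) ^ theta = 3 ^ j * 3 ^ 15 := by
    rw [Nat.cast_pow, Nat.cast_ofNat, two_pow_rpow_theta, pow_add]
  rw [hdiv, hpow] at herror
  rw [hpow]
  calc 0.879 * ((3 : ℝ) ^ j * 3 ^ 15) ≤ 3 ^ j * 15485988 - 0.2 * (3 ^ j * 3 ^ 15) := by
        have hpos : (0 : ℝ) < 3 ^ j := by positivity
        linarith
    _ ≤ |dyadicWa 3 (2 ^ (j + 15))| := sub_le_comm.1 (htriangle.trans herror)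

theorem isLittleO_oddWa :
    (fun n : ℕ ↦ oddWa 3 n) =o[atTop] fun n : ℕ ↦ (n : ℝ) ^ theta := by
  rw [Asymptotics.isLittleO_iff]
  intro ε hε
  have hbdd : BddAbove (Set.range oddMass) := ⟨4.62, Set.forall_mem_range.2 oddMass_le⟩
  obtain ⟨M, hM⟩ := exists_lt_of_lt_ciSup (sub_lt_self (⨆ n, oddMass n) (half_pos hε))
  filter_upwards [tendsto_natCast_rpow_theta.eventually_ge_atTop (|oddWa 3 M| / (ε / 2)),
    eventually_ge_atTop M] with n hlarge hMn
  have hpow : 0 ≤ (n : ℝ) ^ theta := by positivity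
  rw [div_le_iff₀ (half_pos hε)] at hlarge
  have hdiff : |oddWa 3 n - oddWa 3 M| ≤ (n : ℝ) ^ theta * (ε / 2) := by
    refine (abs_oddWa_sub_le hMn).trans (mul_le_mul_of_nonneg_left ?_ hpow)
    linarith [le_ciSup hbdd (n + 1), oddMass_mono M.le_succ]
  rw [Real.norm_eq_abs, Real.norm_eq_abs, abs_of_nonneg hpow]
  linarith [abs_sub_abs_le_abs_sub (oddWa 3 n) (oddWa 3 M)]

theorem eventually_abs_oddWa_le : ∀ᶠ n : ℕ in atTop, |oddWa 3 n| ≤ 0.01 * (n : ℝ) ^ theta := by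
  filter_upwards [isLittleO_oddWa.bound (by norm_num : (0 : ℝ) < 0.01)] with n hn
  rwa [Real.norm_eq_abs, Real.norm_eq_abs, abs_of_nonneg (Real.rpow_nonneg n.cast_nonneg _)] at hn

theorem eventually_abs_Wa_div_rpow_le : ∀ᶠ x : ℝ in atTop, |Wa 3 x| / x ^ theta ≤ 0.971 := by
  have hfloor : Tendsto (fun x : ℝ ↦ ⌊x⌋₊) atTop atTop := tendsto_nat_floor_atTop
  filter_upwards [hfloor.eventually eventually_abs_oddWa_le,
    hfloor.eventually (eventually_ge_atTop (2 ^ 15)), eventually_gt_atTop 0] with x hodd hlarge hx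
  have hWa : Wa 3 x = Wa 3 ⌊x⌋₊ := by rw [Wa, Wa, Nat.floor_natCast]
  rw [div_le_iff₀ (Real.rpow_pos_of_pos hx _), hWa]
  set n := ⌊x⌋₊
  have hpow : (n : ℝ) ^ theta ≤ x ^ theta :=
    Real.rpow_le_rpow n.cast_nonneg (Nat.floor_le hx.le) theta_pos.le
  have hfour : |(3 + 1 : ℝ)| = 4 := by norm_num
  have hsplit : |(3 + 1) * Wa 3 n| ≤ |3 * dyadicWa 3 n| + |oddWa 3 n| := by
    rw [add_one_mul_Wa_natCast]
    exact abs_add_le _ _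
  rw [abs_mul, abs_mul, hfour, abs_of_pos (three_pos (α := ℝ))] at hsplit
  linarith [abs_dyadicWa_le hlarge, Real.rpow_nonneg n.cast_nonneg theta]

theorem frequently_le_abs_Wa_div_rpow : ∃ᶠ x : ℝ in atTop, 0.655 ≤ |Wa 3 x| / x ^ theta := by
  have hpow : Tendsto (fun j : ℕ ↦ 2 ^ (j + 15)) atTop atTop :=
    (tendsto_pow_atTop_atTop_of_one_lt one_lt_two).comp (tendsto_add_atTop_nat 15)
  refine (tendsto_natCast_atTop_atTop.comp hpow).frequently (Eventually.frequently ?_)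
  filter_upwards [hpow.eventually eventually_abs_oddWa_le] with j hodd
  rw [Function.comp_apply]
  have hlower := le_abs_dyadicWa_two_pow j
  set n := 2 ^ (j + 15)
  have hn : 0 < (n : ℝ) ^ theta := Real.rpow_pos_of_pos (by positivity) _
  have hfour : |(3 + 1 : ℝ)| = 4 := by norm_num
  have hsplit : |3 * dyadicWa 3 n| ≤ |(3 + 1) * Wa 3 n| + |oddWa 3 n| := by
    rw [mul_dyadicWa_eq]
    exact abs_sub _ _
  rw [abs_mul, abs_mul, hfour, abs_of_pos (three_pos (α := ℝ))] at hsplit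
  rw [le_div_iff₀ hn]
  linarith

theorem s3_value :
    |Filter.limsup (fun x : ℝ => |Wa 3 x| / x ^ (Real.log 3 / Real.log 2)) Filter.atTop - 0.813| ≤
        0.158 ∧
      Filter.limsup (fun x : ℝ => |Wa 3 x| / x ^ (Real.log 3 / Real.log 2)) Filter.atTop < 1 := by
  rw [← theta]
  have hupper : limsup (fun x : ℝ ↦ |Wa 3 x| / x ^ theta) atTop ≤ 0.971 :=
    limsup_le_of_le (.of_frequently_ge frequently_le_abs_Wa_div_rpow) eventually_abs_Wa_div_rpow_le
  have hlower : 0.655 ≤ limsup (fun x : ℝ ↦ |Wa 3 x| / x ^ theta) atTop :=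
    le_limsup_of_frequently_le frequently_le_abs_Wa_div_rpow
      (isBoundedUnder_of_eventually_le eventually_abs_Wa_div_rpow_le)
  exact ⟨abs_le.2 ⟨by linarith, by linarith⟩, by linarith⟩
end

section
/- The product over odd primes ∏_{p prime, p > 2} (1 + 3/(p(p−2))) is at most 2.8917. -/
/-!
Dividing the factor at `p` by `(1 - p⁻²)⁻³` leaves `1 + O(p⁻³)`. By Euler's product for
`ζ(2) = π²/6` the factors divided out contribute at most `(π²/8)³` over odd primes. The remaining
product converges fast enough to be computed exactly over the primes below `300`, while the rest is
bounded by letting `n` run over all integers `n ≥ 300` and telescoping.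
-/

open Finset Real

namespace OddPrimeProduct

lemma sum_sub_succ_le_of_antitoneOn {α : Type*} [AddCommGroup α] [PartialOrder α]
    [IsOrderedAddMonoid α] {g : ℕ → α} {N : ℕ} (hanti : AntitoneOn g (Set.Ici N))
    (hnonneg : ∀ n, N ≤ n → 0 ≤ g n) {s : Finset ℕ} (hs : ∀ n ∈ s, N ≤ n) :
    ∑ n ∈ s, (g n - g (n + 1)) ≤ g N := by
  obtain ⟨M, hM⟩ := s.exists_nat_subset_range
  have hsub : s ⊆ Ico N (N + M) := fun n hn ↦
    mem_Ico.2 ⟨hs n hn, (mem_range.1 (hM hn)).trans_le (Nat.le_add_left M N)⟩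
  have hterm : ∀ n ∈ Ico N (N + M), n ∉ s → 0 ≤ g n - g (n + 1) := fun n hn _ ↦
    have hNn : N ≤ n := (mem_Ico.1 hn).1
    sub_nonneg.2 (hanti hNn (hNn.trans n.le_succ) n.le_succ)
  calc ∑ n ∈ s, (g n - g (n + 1))
      ≤ ∑ n ∈ Ico N (N + M), (g n - g (n + 1)) := sum_le_sum_of_subset_of_nonneg hsub hterm
    _ = g N - g (N + M) := by
      rw [← neg_sub (g (N + M)), ← sum_Ico_sub g (Nat.le_add_right N M), ← sum_neg_distrib]
      simp only [neg_sub]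
    _ ≤ g N := sub_le_self _ (hnonneg _ (Nat.le_add_right N M))

section EulerProduct

lemma prod_primes_inv_one_sub_le_tsum {f : ℕ →* ℝ} (hf : Summable f) (hnonneg : ∀ n, 0 ≤ f n)
    {s : Finset ℕ} (hs : ∀ p ∈ s, p.Prime) : ∏ p ∈ s, (1 - f p)⁻¹ ≤ ∑' n, f n := by
  rw [← filter_true_of_mem hs, EulerProduct.prod_filter_prime_geometric_eq_tsum_factoredNumbers hf]
  exact hf.tsum_subtype_le _ _ hnonneg

lemma prod_primes_inv_one_sub_inv_sq_le {s : Finset ℕ} (hs : ∀ p ∈ s, p.Prime) :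
    ∏ p ∈ s, (1 - 1 / (p : ℝ) ^ 2)⁻¹ ≤ π ^ 2 / 6 := by
  let f : ℕ →* ℝ :=
    { toFun n := 1 / (n : ℝ) ^ 2
      map_one' := by simp
      map_mul' m n := by push_cast; ring }
  have hf : HasSum f (π ^ 2 / 6) := hasSum_zeta_two
  exact hf.tsum_eq ▸ prod_primes_inv_one_sub_le_tsum hf.summable
    (fun n ↦ by dsimp only [f, MonoidHom.coe_mk, OneHom.coe_mk]; positivity) hs

lemma prod_odd_primes_inv_one_sub_inv_sq_le {s : Finset ℕ} (hs : ∀ p ∈ s, p.Prime ∧ 2 < p) :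
    ∏ p ∈ s, (1 - 1 / (p : ℝ) ^ 2)⁻¹ ≤ π ^ 2 / 8 := by
  have htwo : 2 ∉ s := fun h ↦ lt_irrefl 2 (hs 2 h).2
  have hinsert : ∀ p ∈ insert 2 s, p.Prime :=
    forall_mem_insert _ _ _ |>.2 ⟨Nat.prime_two, fun p hp ↦ (hs p hp).1⟩
  have hle := prod_primes_inv_one_sub_inv_sq_le hinsert
  rw [prod_insert htwo] at hle
  norm_num at hle ⊢
  linarith

end EulerProduct

/-- The factor `1 + 3 / (x (x - 2))` divided by `(1 - x⁻²)⁻³`, the cube of the Euler factor of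
`ζ(2)`. The field is arbitrary so that finite products can be evaluated over `ℚ`. -/
def residualFactor {K : Type*} [Field K] (x : K) : K :=
  (1 + 3 / (x * (x - 2))) * (1 - 1 / x ^ 2) ^ 3

section ResidualFactor

lemma map_residualFactor {K L : Type*} [Field K] [Field L] (φ : K →+* L) (x : K) :
    φ (residualFactor x) = residualFactor (φ x) := by
  simp only [residualFactor, map_mul, map_add, map_sub, map_div₀, map_pow, map_one, map_ofNat]

lemma residualFactor_sub_one {K : Type*} [Field K] {x : K} (hx₀ : x ≠ 0) (hx₂ : x ≠ 2) :
    residualFactor x - 1 =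
      (6 * x ^ 5 - 6 * x ^ 4 - 6 * x ^ 3 + 8 * x ^ 2 + 2 * x - 3) / (x ^ 7 * (x - 2)) := by
  have hsub : x - 2 ≠ 0 := sub_ne_zero.2 hx₂
  rw [residualFactor]
  field_simp
  ring

lemma one_le_residualFactor {x : ℝ} (hx : 2 < x) : 1 ≤ residualFactor x := by
  obtain ⟨y, hy, rfl⟩ : ∃ y > 0, x = y + 2 := ⟨x - 2, by linarith, by ring⟩
  rw [← sub_nonneg, residualFactor_sub_one (by positivity) hx.ne', add_sub_cancel_right]
  refine div_nonneg ?_ (by positivity)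
  -- In `y = x - 2` all coefficients of the numerator are nonnegative.
  ring_nf
  positivity

lemma residualFactor_le {x : ℝ} (hx : 3 ≤ x) :
    residualFactor x ≤ 1 + (3 / (x - 1) ^ 2 - 3 / x ^ 2) := by
  obtain ⟨y, hy, rfl⟩ : ∃ y ≥ 0, x = y + 3 := ⟨x - 3, by linarith, by ring⟩
  rw [← sub_le_iff_le_add', residualFactor_sub_one (by positivity) (by linarith),
    show y + 3 - 1 = y + 2 by ring, show y + 3 - 2 = y + 1 by ring,
    div_sub_div _ _ (by positivity) (by positivity),
    div_le_div_iff₀ (by positivity) (by positivity), ← sub_nonneg]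
  -- In `y = x - 3` all coefficients of the numerator are nonnegative.
  ring_nf
  positivity

lemma prod_residualFactor_le_exp {N : ℕ} (hN : 3 ≤ N) {s : Finset ℕ} (hs : ∀ n ∈ s, N ≤ n) :
    ∏ n ∈ s, residualFactor (n : ℝ) ≤ exp (3 / ((N : ℝ) - 1) ^ 2) := by
  let g (n : ℕ) : ℝ := 3 / ((n : ℝ) - 1) ^ 2
  have hthree {n : ℕ} (hn : N ≤ n) : (3 : ℝ) ≤ n := by exact_mod_cast hN.trans hn
  have hanti : AntitoneOn g (Set.Ici N) := fun m hm n _ hmn ↦ by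
    have hm3 : (3 : ℝ) ≤ m := hthree hm
    have hmn' : (m : ℝ) ≤ n := by exact_mod_cast hmn
    have : (0 : ℝ) < m - 1 := by linarith
    dsimp only [g]
    gcongr
  have hfactor : ∀ n ∈ s, residualFactor (n : ℝ) ≤ exp (g n - g (n + 1)) := fun n hn ↦ by
    calc residualFactor (n : ℝ)
        ≤ 1 + (g n - g (n + 1)) := by
          simpa only [g, Nat.cast_succ, add_sub_cancel_right] using
            residualFactor_le (hthree (hs n hn))
      _ ≤ exp (g n - g (n + 1)) := by rw [add_comm]; exact add_one_le_exp _
  have hpos : ∀ n ∈ s, 0 ≤ residualFactor (n : ℝ) := fun n hn ↦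
    zero_le_one.trans (one_le_residualFactor (by linarith [hthree (hs n hn)]))
  calc ∏ n ∈ s, residualFactor (n : ℝ)
      ≤ ∏ n ∈ s, exp (g n - g (n + 1)) := prod_le_prod hpos hfactor
    _ = exp (∑ n ∈ s, (g n - g (n + 1))) := (exp_sum _ _).symm
    _ ≤ exp (g N) :=
      exp_le_exp.2 (sum_sub_succ_le_of_antitoneOn hanti (fun n _ ↦ by positivity) hs)

lemma prod_primes_residualFactor_le_mul_exp {N : ℕ} (hN : 3 ≤ N) {s : Finset ℕ}
    (hs : ∀ p ∈ s, p.Prime ∧ 2 < p) :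
    ∏ p ∈ s, residualFactor (p : ℝ) ≤
      (∏ p ∈ Ico 3 N with p.Prime, residualFactor (p : ℝ)) * exp (3 / ((N : ℝ) - 1) ^ 2) := by
  have hone {n : ℕ} (hn : 2 < n) : 1 ≤ residualFactor (n : ℝ) :=
    one_le_residualFactor (by exact_mod_cast hn)
  have hnonneg {n : ℕ} (hn : 2 < n) : 0 ≤ residualFactor (n : ℝ) := zero_le_one.trans (hone hn)
  have hsmall : {p ∈ s | p < N} ⊆ {p ∈ Ico 3 N | p.Prime} := fun p hp ↦ by
    obtain ⟨hps, hpN⟩ := mem_filter.1 hp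
    exact mem_filter.2 ⟨mem_Ico.2 ⟨(hs p hps).2, hpN⟩, (hs p hps).1⟩
  have hhead : ∏ p ∈ s with p < N, residualFactor (p : ℝ) ≤
      ∏ p ∈ Ico 3 N with p.Prime, residualFactor (p : ℝ) :=
    prod_le_prod_of_subset_of_one_le hsmall
      (fun p hp ↦ hnonneg (hs p (mem_filter.1 hp).1).2)
      fun p hp _ ↦ hone (mem_Ico.1 (mem_filter.1 hp).1).1
  have htail : ∏ p ∈ s with ¬ p < N, residualFactor (p : ℝ) ≤ exp (3 / ((N : ℝ) - 1) ^ 2) :=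
    prod_residualFactor_le_exp hN fun p hp ↦ not_lt.1 (mem_filter.1 hp).2
  rw [← prod_filter_mul_prod_filter_not s (· < N)]
  exact mul_le_mul hhead htail
    (prod_nonneg fun p hp ↦ hnonneg (hs p (mem_filter.1 hp).1).2)
    (prod_nonneg fun p hp ↦ hnonneg (mem_Ico.1 (mem_filter.1 hp).1).1)

lemma prod_primes_lt_300_residualFactor_le :
    ∏ p ∈ Ico 3 300 with Nat.Prime p, residualFactor (p : ℝ) ≤ 1.53994 := by
  have hrat : ∏ p ∈ Ico 3 300 with Nat.Prime p, residualFactor (p : ℚ) ≤ 1.53994 := by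
    decide +kernel
  calc ∏ p ∈ Ico 3 300 with Nat.Prime p, residualFactor (p : ℝ)
      = Rat.castHom ℝ (∏ p ∈ Ico 3 300 with Nat.Prime p, residualFactor (p : ℚ)) := by
        simp only [map_prod, map_residualFactor, map_natCast]
    _ ≤ Rat.castHom ℝ 1.53994 := Rat.cast_le.2 hrat
    _ = 1.53994 := by norm_num

lemma prod_odd_primes_residualFactor_le {s : Finset ℕ} (hs : ∀ p ∈ s, p.Prime ∧ 2 < p) :
    ∏ p ∈ s, residualFactor (p : ℝ) ≤ 1.53994 / (1 - 3 / 299 ^ 2) := by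
  have hexp : exp (3 / ((300 : ℕ) - 1 : ℝ) ^ 2) ≤ 1 / (1 - 3 / 299 ^ 2) := by
    norm_num only [Nat.cast_ofNat]
    exact (exp_bound_div_one_sub_of_interval (by norm_num) (by norm_num)).trans (by norm_num)
  calc ∏ p ∈ s, residualFactor (p : ℝ)
      ≤ _ := prod_primes_residualFactor_le_mul_exp (N := 300) (by norm_num) hs
    _ ≤ 1.53994 * (1 / (1 - 3 / 299 ^ 2)) := by
      gcongr
      exact prod_primes_lt_300_residualFactor_le
    _ = 1.53994 / (1 - 3 / 299 ^ 2) := mul_one_div _ _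

end ResidualFactor

lemma one_add_eq_inv_cube_mul_residualFactor {K : Type*} [Field K] {x : K}
    (hx : 1 - 1 / x ^ 2 ≠ 0) :
    1 + 3 / (x * (x - 2)) = (1 - 1 / x ^ 2)⁻¹ ^ 3 * residualFactor x := by
  rw [residualFactor, inv_pow, mul_left_comm, inv_mul_cancel₀ (pow_ne_zero 3 hx), mul_one]

lemma prod_finset_odd_primes_le {s : Finset ℕ} (hs : ∀ p ∈ s, p.Prime ∧ 2 < p) :
    ∏ p ∈ s, (1 + 3 / ((p : ℝ) * ((p : ℝ) - 2))) ≤ 2.8917 := by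
  have hgt {p : ℕ} (hp : p ∈ s) : (2 : ℝ) < p := by exact_mod_cast (hs p hp).2
  have hresidual_nonneg : 0 ≤ ∏ p ∈ s, residualFactor (p : ℝ) :=
    prod_nonneg fun p hp ↦ zero_le_one.trans (one_le_residualFactor (hgt hp))
  have heuler_pos {p : ℕ} (hp : p ∈ s) : 0 < 1 - 1 / (p : ℝ) ^ 2 := by
    have hpow : 1 < (p : ℝ) ^ 2 := one_lt_pow₀ (by linarith [hgt hp]) two_ne_zero
    exact sub_pos.2 ((div_lt_one (by positivity)).2 hpow)
  have heuler_nonneg : 0 ≤ ∏ p ∈ s, (1 - 1 / (p : ℝ) ^ 2)⁻¹ :=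
    prod_nonneg fun p hp ↦ inv_nonneg.2 (heuler_pos hp).le
  calc ∏ p ∈ s, (1 + 3 / ((p : ℝ) * ((p : ℝ) - 2)))
      = (∏ p ∈ s, (1 - 1 / (p : ℝ) ^ 2)⁻¹) ^ 3 * ∏ p ∈ s, residualFactor (p : ℝ) := by
        rw [← prod_pow, ← prod_mul_distrib]
        exact prod_congr rfl fun p hp ↦
          one_add_eq_inv_cube_mul_residualFactor (heuler_pos hp).ne'
    _ ≤ (π ^ 2 / 8) ^ 3 * (1.53994 / (1 - 3 / 299 ^ 2)) := by
        gcongr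
        · exact prod_odd_primes_inv_one_sub_inv_sq_le hs
        · exact prod_odd_primes_residualFactor_le hs
    _ ≤ (3.141593 ^ 2 / 8) ^ 3 * (1.53994 / (1 - 3 / 299 ^ 2)) := by
        gcongr ?_ * _
        gcongr
        exact pi_lt_d6.le
    _ ≤ 2.8917 := by norm_num

lemma multipliable_odd_primes :
    Multipliable fun p : {p : ℕ // p.Prime ∧ 2 < p} ↦ 1 + 3 / ((p.1 : ℝ) * ((p.1 : ℝ) - 2)) := by
  have hsq : Summable fun p : {p : ℕ // p.Prime ∧ 2 < p} ↦ 9 * (1 / (p.1 : ℝ) ^ 2) :=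
    (hasSum_zeta_two.summable.comp_injective Subtype.val_injective).mul_left 9
  have hge (p : {p : ℕ // p.Prime ∧ 2 < p}) : (3 : ℝ) ≤ p.1 := by exact_mod_cast p.2.2
  refine Real.multipliable_one_add_of_summable (hsq.of_nonneg_of_le (fun p ↦ ?_) fun p ↦ ?_)
  · have : (0 : ℝ) ≤ p.1 - 2 := by linarith [hge p]
    positivity
  · have := hge p
    rw [mul_one_div, div_le_div_iff₀ (by nlinarith) (by positivity)]
    nlinarith

end OddPrimeProduct

theorem prod_odd_primes_le :
    (∏' p : {p : ℕ // p.Prime ∧ 2 < p}, (1 + 3 / ((p.1 : ℝ) * ((p.1 : ℝ) - 2)))) ≤ 2.8917 := by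
  refine OddPrimeProduct.multipliable_odd_primes.tprod_le_of_prod_le fun s ↦ ?_
  have hs : ∀ p ∈ s.map (Function.Embedding.subtype _), p.Prime ∧ 2 < p := by
    simp only [mem_map, Function.Embedding.subtype_apply]
    rintro _ ⟨p, -, rfl⟩
    exact p.2
  simpa only [prod_map, Function.Embedding.subtype_apply] using
    OddPrimeProduct.prod_finset_odd_primes_le hs
end

section
/- For all real x ≥ 5, the sum over primes p with 5 ≤ p ≤ x of 1/p is strictly less than log log x. -/
open Finset

/-!
Legendre's `∏ p ^ ⌊n / p⌋ ∣ n!`, Stirling's upper bound for `n!` and Chebyshev's bound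
`θ(n) ≤ n log 4` give a one-sided Mertens first theorem, `∑_{p ≤ n} log p / p ≤ log n + c` for all
`n ≥ N`, with explicit `c`. Abel summation turns it into `∑_{p ≤ n} 1 / p ≤ log log n + K`, where
`K` is computed from the primes up to `N`. Already `N = 32` gives `K < 5 / 6 = 1 / 2 + 1 / 3`, the
contribution of the primes `2` and `3`. On `[5, 10]` and `[11, 32]` it is enough to compare the
sum at the right endpoint with `log log` at the left one.
-/

open Nat (primesLE)
open scoped Nat Chebyshev

theorem pow_div_dvd_factorial (k n : ℕ) : k ^ (n / k) ∣ n ! := by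
  rcases k.eq_zero_or_pos with rfl | hk
  · simp
  calc k ^ (n / k) ∣ k ! ^ (n / k) := pow_dvd_pow_of_dvd (Nat.dvd_factorial hk le_rfl) _
    _ ∣ (n / k * k)! := by
      simpa using Nat.prod_factorial_dvd_factorial_sum (range (n / k)) fun _ ↦ k
    _ ∣ n ! := Nat.factorial_dvd_factorial (Nat.div_mul_le_self n k)

theorem prod_primesLE_pow_div_dvd_factorial (n : ℕ) : ∏ p ∈ primesLE n, p ^ (n / p) ∣ n ! := by
  refine prod_dvd_of_isRelPrime (fun p hp q hq hpq ↦ ?_) fun p _ ↦ pow_div_dvd_factorial p n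
  have hcoprime : p.Coprime q := (Nat.coprime_primes (Nat.prime_of_mem_primesLE hp)
    (Nat.prime_of_mem_primesLE hq)).2 hpq
  exact Nat.coprime_iff_isRelPrime.1 (hcoprime.pow _ _)

theorem sum_primesLE_div_mul_log_le_log_factorial (n : ℕ) :
    ∑ p ∈ primesLE n, ((n / p : ℕ) : ℝ) * Real.log p ≤ Real.log n ! := by
  have hpow_pos : ∀ p ∈ primesLE n, 0 < p ^ (n / p) := fun p hp ↦
    pow_pos (Nat.prime_of_mem_primesLE hp).pos _
  calc ∑ p ∈ primesLE n, ((n / p : ℕ) : ℝ) * Real.log p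
      = Real.log (∏ p ∈ primesLE n, p ^ (n / p) : ℕ) := by
        rw [Nat.cast_prod, Real.log_prod fun p hp ↦ by exact_mod_cast (hpow_pos p hp).ne']
        simp only [Nat.cast_pow, Real.log_pow]
    _ ≤ Real.log n ! := by
        refine Real.log_le_log (by exact_mod_cast prod_pos hpow_pos) ?_
        exact_mod_cast Nat.le_of_dvd n.factorial_pos (prod_primesLE_pow_div_dvd_factorial n)

theorem mul_sum_primesLE_log_div_le_log_factorial_add_theta (n : ℕ) :
    n * ∑ p ∈ primesLE n, Real.log p / p ≤ Real.log n ! + θ n := by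
  have hterm (p : ℕ) : n * (Real.log p / p) ≤ ((n / p : ℕ) : ℝ) * Real.log p + Real.log p := by
    have hfloor : (n : ℝ) / p ≤ ((n / p : ℕ) : ℝ) + 1 := by
      simpa only [Nat.floor_div_eq_div] using (Nat.lt_floor_add_one ((n : ℝ) / p)).le
    calc n * (Real.log p / p) = n / p * Real.log p := by ring
      _ ≤ (((n / p : ℕ) : ℝ) + 1) * Real.log p := by gcongr
      _ = ((n / p : ℕ) : ℝ) * Real.log p + Real.log p := by ring
  calc n * ∑ p ∈ primesLE n, Real.log p / p
      ≤ ∑ p ∈ primesLE n, (((n / p : ℕ) : ℝ) * Real.log p + Real.log p) := by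
        rw [mul_sum]
        exact sum_le_sum fun p _ ↦ hterm p
    _ ≤ Real.log n ! + θ n := by
        rw [sum_add_distrib, Chebyshev.theta_eq_sum_primesLE_log]
        gcongr
        exact sum_primesLE_div_mul_log_le_log_factorial n

theorem log_factorial_le {n : ℕ} (hn : n ≠ 0) :
    Real.log n ! ≤ n * Real.log n - n + Real.log n / 2 + 1 := by
  have hn' : (n : ℝ) ≠ 0 := by exact_mod_cast hn
  have hanti : Real.log (Stirling.stirlingSeq n) ≤ Real.log (Stirling.stirlingSeq 1) := by
    obtain ⟨m, rfl⟩ := Nat.exists_eq_succ_of_ne_zero hn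
    exact Stirling.log_stirlingSeq'_antitone m.zero_le
  rw [Stirling.log_stirlingSeq_formula, Stirling.log_stirlingSeq_formula,
    Real.log_mul two_ne_zero hn', Real.log_div hn' (Real.exp_ne_zero 1)] at hanti
  norm_num at hanti
  linarith

theorem sum_primesLE_log_div_le {N n : ℕ} (hN : 3 ≤ N) (hNn : N ≤ n) :
    ∑ p ∈ primesLE n, Real.log p / p ≤
      Real.log n + (Real.log 4 - 1 + Real.log N / N / 2 + 1 / N) := by
  have hN0 : (3 : ℝ) ≤ N := by exact_mod_cast hN
  have hNn' : (N : ℝ) ≤ n := by exact_mod_cast hNn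
  have hn0 : (0 : ℝ) < n := by linarith
  have hmul : n * ∑ p ∈ primesLE n, Real.log p / p ≤
      n * (Real.log n + (Real.log 4 - 1 + Real.log n / n / 2 + 1 / n)) :=
    calc n * ∑ p ∈ primesLE n, Real.log p / p ≤ Real.log n ! + θ n :=
          mul_sum_primesLE_log_div_le_log_factorial_add_theta n
      _ ≤ (n * Real.log n - n + Real.log n / 2 + 1) + Real.log 4 * n :=
          add_le_add (log_factorial_le (by lia)) (Chebyshev.theta_le_log4_mul_x hn0.le)
      _ = n * (Real.log n + (Real.log 4 - 1 + Real.log n / n / 2 + 1 / n)) := by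
          field_simp
          ring
  have hanti : Real.log n / n ≤ Real.log N / N :=
    Real.log_div_self_antitoneOn (Real.exp_one_lt_three.le.trans hN0)
      (Real.exp_one_lt_three.le.trans (hN0.trans hNn')) hNn'
  calc ∑ p ∈ primesLE n, Real.log p / p
      ≤ Real.log n + (Real.log 4 - 1 + Real.log n / n / 2 + 1 / n) := le_of_mul_le_mul_left hmul hn0
    _ ≤ Real.log n + (Real.log 4 - 1 + Real.log N / N / 2 + 1 / N) := by gcongr

theorem mul_inv_sub_inv_le_log_sub_log {a s t : ℝ} (hs : 0 < s) (hst : s ≤ t) (ha : a ≤ s) :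
    a * (s⁻¹ - t⁻¹) ≤ Real.log t - Real.log s := by
  have ht : 0 < t := hs.trans_le hst
  calc a * (s⁻¹ - t⁻¹) ≤ s * (s⁻¹ - t⁻¹) := by
        gcongr
        exact sub_nonneg.2 (inv_anti₀ hs hst)
    _ = 1 - (t / s)⁻¹ := by field_simp
    _ ≤ Real.log (t / s) := Real.one_sub_inv_le_log_of_pos (by positivity)
    _ = Real.log t - Real.log s := Real.log_div ht.ne' hs.ne'

section AbelSummation

variable {f : ℕ → ℝ} {c : ℝ} {N n : ℕ}

/- The new term `f (n + 1)` cancels against its contribution to the quotient, so only the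
denominator changes from `n` to `n + 1`. -/
theorem sum_sub_sum_mul_log_div_log_sub_log_log_succ_le (hn : 2 ≤ n)
    (hf : ∑ k ∈ range (n + 1), f k * Real.log k ≤ Real.log n + c) :
    ∑ k ∈ range (n + 2), f k
        - (∑ k ∈ range (n + 2), f k * Real.log k - c) / Real.log (n + 1 : ℕ)
        - Real.log (Real.log (n + 1 : ℕ)) ≤
      ∑ k ∈ range (n + 1), f k - (∑ k ∈ range (n + 1), f k * Real.log k - c) / Real.log n
        - Real.log (Real.log n) := by
  have hlog_pos : 0 < Real.log n := Real.log_pos (by exact_mod_cast hn)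
  have hlog_le : Real.log n ≤ Real.log (n + 1 : ℕ) :=
    Real.log_le_log (by positivity) (by exact_mod_cast n.le_succ)
  have hlog_succ : Real.log (n + 1 : ℕ) ≠ 0 := (hlog_pos.trans_le hlog_le).ne'
  have hstep := mul_inv_sub_inv_le_log_sub_log hlog_pos hlog_le (sub_le_iff_le_add.2 hf)
  have hcancel : (∑ k ∈ range (n + 2), f k * Real.log k - c) / Real.log (n + 1 : ℕ) =
      (∑ k ∈ range (n + 1), f k * Real.log k - c) / Real.log (n + 1 : ℕ) + f (n + 1) := by
    rw [sum_range_succ _ (n + 1), add_sub_right_comm, add_div, mul_div_cancel_right₀ _ hlog_succ]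
  rw [hcancel, sum_range_succ f (n + 1)]
  simp only [mul_sub, ← div_eq_mul_inv] at hstep
  linarith

theorem sum_le_log_log_add (hN : 2 ≤ N) (hNn : N ≤ n)
    (hf : ∀ m ≥ N, ∑ k ∈ range (m + 1), f k * Real.log k ≤ Real.log m + c) :
    ∑ k ∈ range (n + 1), f k ≤ Real.log (Real.log n) + (∑ k ∈ range (N + 1), f k
      - (∑ k ∈ range (N + 1), f k * Real.log k - c) / Real.log N - Real.log (Real.log N) + 1) := by
  have hdecr : ∑ k ∈ range (n + 1), f k
        - (∑ k ∈ range (n + 1), f k * Real.log k - c) / Real.log n - Real.log (Real.log n) ≤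
      ∑ k ∈ range (N + 1), f k - (∑ k ∈ range (N + 1), f k * Real.log k - c) / Real.log N
        - Real.log (Real.log N) := by
    induction n, hNn using Nat.le_induction with
    | base => exact le_rfl
    | succ m hm ih =>
      exact (sum_sub_sum_mul_log_div_log_sub_log_log_succ_le (hN.trans hm) (hf m hm)).trans ih
  have hlog_pos : 0 < Real.log n := Real.log_pos (by exact_mod_cast hN.trans hNn)
  have hratio : (∑ k ∈ range (n + 1), f k * Real.log k - c) / Real.log n ≤ 1 :=
    (div_le_one hlog_pos).2 (sub_le_iff_le_add.2 (hf n hNn))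
  linarith

end AbelSummation

theorem sum_primesLE_one_div_le_log_log_add {c : ℝ} {N n : ℕ} (hN : 2 ≤ N) (hNn : N ≤ n)
    (hc : ∀ m ≥ N, ∑ p ∈ primesLE m, Real.log p / p ≤ Real.log m + c) :
    ∑ p ∈ primesLE n, (1 : ℝ) / p ≤ Real.log (Real.log n) + (∑ p ∈ primesLE N, (1 : ℝ) / p
      - (∑ p ∈ primesLE N, Real.log p / p - c) / Real.log N - Real.log (Real.log N) + 1) := by
  have hweight (m : ℕ) : ∑ p ∈ primesLE m, Real.log p / p =
      ∑ k ∈ range (m + 1), (if k.Prime then (1 : ℝ) / k else 0) * Real.log k := by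
    simp only [Nat.primesLE_eq_filter_range, sum_filter, ite_mul, zero_mul, one_div_mul_eq_div]
  simp only [hweight] at hc ⊢
  simp only [Nat.primesLE_eq_filter_range, sum_filter]
  exact sum_le_log_log_add hN hNn hc

theorem natLog_pow_mul_log_le (b k : ℕ) {n : ℕ} (hn : n ≠ 0) :
    Nat.log b (n ^ k) * Real.log b ≤ k * Real.log n := by
  rcases b.eq_zero_or_pos with rfl | hb
  · simpa using mul_nonneg k.cast_nonneg (Real.log_natCast_nonneg n)
  rw [← Real.log_pow, ← Real.log_pow]
  refine Real.log_le_log (by positivity) ?_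
  exact_mod_cast Nat.pow_log_le_self b (pow_ne_zero k hn)

theorem primesLE_thirty_two : primesLE 32 = {2, 3, 5, 7, 11, 13, 17, 19, 23, 29, 31} := by
  decide

theorem sum_primesLE_thirty_two_one_div_lt : ∑ p ∈ primesLE 32, (1 : ℝ) / p < 1.566 := by
  rw [primesLE_thirty_two]
  norm_num

theorem lt_sum_primesLE_thirty_two_log_div : 2.24 < ∑ p ∈ primesLE 32, Real.log p / p := by
  have hlog {p : ℕ} (hp : p ∈ primesLE 32) :
      (Nat.log 2 (p ^ 2) : ℝ) / 2 * Real.log 2 / p ≤ Real.log p / p := by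
    have := natLog_pow_mul_log_le 2 2 (Nat.prime_of_mem_primesLE hp).ne_zero
    push_cast at this
    gcongr
    linarith
  refine lt_of_lt_of_le ?_ (sum_le_sum fun p ↦ hlog)
  rw [primesLE_thirty_two]
  norm_num
  linarith [Real.log_two_gt_d9]

theorem log_add_one_sub_inv_le_log_of_mul_le {a b y : ℝ} (ha : 0 < a) (hb : 0 < b)
    (h : a * b ≤ y) : Real.log a + (1 - b⁻¹) ≤ Real.log y :=
  calc Real.log a + (1 - b⁻¹) ≤ Real.log a + Real.log b := by
        gcongr
        exact Real.one_sub_inv_le_log_of_pos hb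
    _ = Real.log (a * b) := (Real.log_mul ha.ne' hb.ne').symm
    _ ≤ Real.log y := Real.log_le_log (mul_pos ha hb) h

theorem sum_primesLE_one_div_lt_of_thirty_two_le {n : ℕ} (hn : 32 ≤ n) :
    ∑ p ∈ primesLE n, (1 : ℝ) / p < Real.log (Real.log n) + 5 / 6 := by
  have hlog2_gt := Real.log_two_gt_d9
  have hlog2_lt := Real.log_two_lt_d9
  have hlog4 : Real.log 4 = 2 * Real.log 2 := by
    rw [show (4 : ℝ) = 2 ^ 2 by norm_num, Real.log_pow, Nat.cast_ofNat]
  have hlog32 : Real.log (32 : ℕ) = 5 * Real.log 2 := by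
    rw [show ((32 : ℕ) : ℝ) = 2 ^ 5 by norm_num, Real.log_pow, Nat.cast_ofNat]
  have hmertens : ∀ m ≥ 32, ∑ p ∈ primesLE m, Real.log p / p ≤ Real.log m + 0.472 := by
    intro m hm
    have hle := sum_primesLE_log_div_le (by norm_num) hm
    rw [hlog4, hlog32, Nat.cast_ofNat] at hle
    linarith
  have hquot : 0.51 < (∑ p ∈ primesLE 32, Real.log p / p - 0.472) / Real.log (32 : ℕ) := by
    rw [hlog32, lt_div_iff₀ (by positivity)]
    linarith [lt_sum_primesLE_thirty_two_log_div]
  have hloglog : 1.232 < Real.log (Real.log (32 : ℕ)) := by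
    have hle := log_add_one_sub_inv_le_log_of_mul_le (a := 4) (b := 0.8664)
      (y := Real.log (32 : ℕ)) (by norm_num) (by norm_num) (by rw [hlog32]; linarith)
    norm_num [hlog4] at hle ⊢
    linarith
  linarith [sum_primesLE_one_div_le_log_log_add (by norm_num) hn hmertens,
    sum_primesLE_thirty_two_one_div_lt]

theorem monotone_sum_primesLE_one_div : Monotone fun n ↦ ∑ p ∈ primesLE n, (1 : ℝ) / p :=
  fun _ _ hmn ↦ sum_le_sum_of_subset_of_nonneg (Nat.primesLE_mono hmn) fun _ _ _ ↦ by positivity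

theorem sum_primesLE_one_div_lt_of_le_ten {n : ℕ} (h5 : 5 ≤ n) (h10 : n ≤ 10) :
    ∑ p ∈ primesLE n, (1 : ℝ) / p < Real.log (Real.log n) + 5 / 6 := by
  have hlog : 1.6 ≤ Real.log n :=
    calc (1.6 : ℝ) ≤ Real.log 5 := by linarith [Real.log_five_gt_d9]
      _ ≤ Real.log n := Real.log_le_log (by norm_num) (by exact_mod_cast h5)
  calc ∑ p ∈ primesLE n, (1 : ℝ) / p ≤ ∑ p ∈ primesLE 10, (1 : ℝ) / p :=
        monotone_sum_primesLE_one_div h10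
    _ < (1 - 1.6⁻¹) + 5 / 6 := by
        rw [show primesLE 10 = {2, 3, 5, 7} by decide]
        norm_num
    _ ≤ Real.log 1.6 + 5 / 6 := by
        gcongr
        exact Real.one_sub_inv_le_log_of_pos (by norm_num)
    _ ≤ Real.log (Real.log n) + 5 / 6 := by gcongr

theorem sum_primesLE_one_div_lt_of_le_thirty_two {n : ℕ} (h11 : 11 ≤ n) (h32 : n ≤ 32) :
    ∑ p ∈ primesLE n, (1 : ℝ) / p < Real.log (Real.log n) + 5 / 6 := by
  have hlog11 : 13 * Real.log 2 ≤ 4 * Real.log 11 := by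
    have hle := natLog_pow_mul_log_le 2 4 (n := 11) (by norm_num)
    norm_num at hle
    exact hle
  have hlog : 2 * 1.125 ≤ Real.log n :=
    calc (2 * 1.125 : ℝ) ≤ Real.log 11 := by linarith [Real.log_two_gt_d9]
      _ ≤ Real.log n := Real.log_le_log (by norm_num) (by exact_mod_cast h11)
  calc ∑ p ∈ primesLE n, (1 : ℝ) / p ≤ ∑ p ∈ primesLE 32, (1 : ℝ) / p :=
        monotone_sum_primesLE_one_div h32
    _ < Real.log 2 + (1 - 1.125⁻¹) + 5 / 6 := by
        linarith [sum_primesLE_thirty_two_one_div_lt, Real.log_two_gt_d9]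
    _ ≤ Real.log (Real.log n) + 5 / 6 := by
        gcongr
        exact log_add_one_sub_inv_le_log_of_mul_le (by norm_num) (by norm_num) hlog

theorem sum_primesLE_one_div_lt_log_log_add {n : ℕ} (hn : 5 ≤ n) :
    ∑ p ∈ primesLE n, (1 : ℝ) / p < Real.log (Real.log n) + 5 / 6 := by
  rcases le_or_gt n 10 with h10 | h11
  · exact sum_primesLE_one_div_lt_of_le_ten hn h10
  rcases le_total n 32 with h32 | h32
  · exact sum_primesLE_one_div_lt_of_le_thirty_two h11 h32
  · exact sum_primesLE_one_div_lt_of_thirty_two_le h32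

theorem primesLE_eq_insert_two_insert_three {n : ℕ} (hn : 3 ≤ n) :
    primesLE n = insert 2 (insert 3 ((Icc 5 n).filter Nat.Prime)) := by
  ext p
  simp only [Nat.mem_primesLE, mem_insert, mem_filter, mem_Icc]
  constructor
  · rintro ⟨hpn, hp⟩
    rcases lt_or_ge p 5 with hp5 | hp5
    · revert hp
      interval_cases p <;> norm_num
    · exact Or.inr (Or.inr ⟨⟨hp5, hpn⟩, hp⟩)
  · rintro (rfl | rfl | ⟨⟨-, hpn⟩, hp⟩)
    · exact ⟨by lia, Nat.prime_two⟩
    · exact ⟨hn, Nat.prime_three⟩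
    · exact ⟨hpn, hp⟩

theorem sum_primesLE_one_div_eq_add_sum_filter_Icc_five {n : ℕ} (hn : 3 ≤ n) :
    ∑ p ∈ primesLE n, (1 : ℝ) / p = 5 / 6 + ∑ p ∈ (Icc 5 n).filter Nat.Prime, (1 : ℝ) / p := by
  rw [primesLE_eq_insert_two_insert_three hn, sum_insert (by simp), sum_insert (by simp)]
  push_cast
  ring

theorem sum_one_div_prime_lt_log_log :
    ∀ x : ℝ, 5 ≤ x →
      ∑ p ∈ (Finset.Icc 5 ⌊x⌋₊).filter Nat.Prime, (1 : ℝ) / p <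
        Real.log (Real.log x) := by
  intro x hx
  have hfloor : 5 ≤ ⌊x⌋₊ := Nat.le_floor (by exact_mod_cast hx)
  have hfloor' : (5 : ℝ) ≤ ⌊x⌋₊ := by exact_mod_cast hfloor
  have hnat : ∑ p ∈ (Icc 5 ⌊x⌋₊).filter Nat.Prime, (1 : ℝ) / p < Real.log (Real.log ⌊x⌋₊) := by
    have hlt := sum_primesLE_one_div_lt_log_log_add hfloor
    rw [sum_primesLE_one_div_eq_add_sum_filter_Icc_five (by lia)] at hlt
    linarith
  refine hnat.trans_le (Real.log_le_log (Real.log_pos (by linarith)) ?_)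
  exact Real.log_le_log (by linarith) (Nat.floor_le (by linarith))
end

section
/- For all real x ≥ 5, ∑_{m ≤ x, gcd(m,6)=1} 3^{Ω(m)}/m ≤ 1.32·(log x)^3, where the sum is over natural numbers m ≤ x coprime to 6. -/
open Finset ArithmeticFunction

open scoped ArithmeticFunction.Moebius ArithmeticFunction.Omega ArithmeticFunction.zeta

/-!
With respect to Dirichlet convolution, `3 ^ Ω = g * ζ * ζ * ζ` for `g = 3 ^ Ω * μ * μ * μ`. On the
powers of a prime, convolving with `μ` replaces a sequence by its consecutive differences, which
lowers its ratio of growth by at most `1`; starting from ratio `3` this can be done three times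
without losing nonnegativity, so `g ≥ 0`. Multiplication by `χ n = 1_{(n, 6) = 1} / n` respects
convolution, hence the sum in question is at most `(∑ χ g) * (∑ χ) ^ 3`, with all sums over `n ≤ x`.

The first factor is at most the product of `(1 - 1/p) ^ 3 / (1 - 3/p)` over primes `p ≥ 5`, which is
at most `9/5` by comparison with a telescoping product over odd integers. Since six consecutive
integers contain two that are coprime to `6`, `∑ χ` grows like `log x / 3`, and it stays below
`0.9 * log x` from `x = 5` on. Finally `9/5 * 0.9 ^ 3 < 1.32`.
-/

section OrderedSemiring

variable {R : Type*} [CommSemiring R] [PartialOrder R] [IsOrderedRing R]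
  {f g : ArithmeticFunction R}

lemma sum_mul_le_sum_mul_sum (hf : ∀ n, 0 ≤ f n) (hg : ∀ n, 0 ≤ g n) (N : ℕ) :
    ∑ n ∈ Icc 1 N, (f * g) n ≤ (∑ n ∈ Icc 1 N, f n) * ∑ n ∈ Icc 1 N, g n := by
  rw [show Icc 1 N = Ioc 0 N from Icc_add_one_left_eq_Ioc 0 N, sum_Ioc_mul_eq_sum_prod_filter,
    sum_mul_sum, ← sum_product']
  exact sum_le_sum_of_subset_of_nonneg (filter_subset _ _) fun x _ _ => mul_nonneg (hf _) (hg _)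

lemma convolution_nonneg (hf : ∀ n, 0 ≤ f n) (hg : ∀ n, 0 ≤ g n) (n : ℕ) :
    0 ≤ (f * g) n := by
  rw [mul_apply]
  exact sum_nonneg fun x _ => mul_nonneg (hf _) (hg _)

lemma sum_mul_pow_le_sum_mul_sum_pow (hf : ∀ n, 0 ≤ f n) (hg : ∀ n, 0 ≤ g n) (j N : ℕ) :
    ∑ n ∈ Icc 1 N, (f * g ^ j) n ≤ (∑ n ∈ Icc 1 N, f n) * (∑ n ∈ Icc 1 N, g n) ^ j := by
  induction j generalizing f with
  | zero => simp
  | succ j ih =>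
    calc ∑ n ∈ Icc 1 N, (f * g ^ (j + 1)) n = ∑ n ∈ Icc 1 N, (f * g * g ^ j) n := by
          rw [pow_succ', mul_assoc]
      _ ≤ (∑ n ∈ Icc 1 N, (f * g) n) * (∑ n ∈ Icc 1 N, g n) ^ j := ih (convolution_nonneg hf hg)
      _ ≤ ((∑ n ∈ Icc 1 N, f n) * ∑ n ∈ Icc 1 N, g n) * (∑ n ∈ Icc 1 N, g n) ^ j := by
          gcongr
          · exact pow_nonneg (sum_nonneg fun n _ => hg n) j
          · exact sum_mul_le_sum_mul_sum hf hg N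
      _ = (∑ n ∈ Icc 1 N, f n) * (∑ n ∈ Icc 1 N, g n) ^ (j + 1) := by ring

lemma nonneg_of_prime_pow_nonneg (hf : f.IsMultiplicative)
    (hpow : ∀ p k : ℕ, p.Prime → 0 ≤ f (p ^ k)) (n : ℕ) : 0 ≤ f n := by
  rcases eq_or_ne n 0 with rfl | hn
  · simp
  rw [hf.multiplicative_factorization f hn]
  exact prod_nonneg fun p hp => hpow p _ (Nat.prime_of_mem_primeFactors hp)

end OrderedSemiring

-- Every positive `n ≤ N` is `M`-smooth, so the sum is a partial sum of the finite Euler product.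
lemma sum_le_prod_primesBelow {f : ArithmeticFunction ℝ} (hf : f.IsMultiplicative)
    (hf₀ : ∀ n, 0 ≤ f n) {s : ℕ → ℝ} (hs : ∀ p, p.Prime → HasSum (fun k => f (p ^ k)) (s p))
    {N M : ℕ} (hNM : N < M) :
    ∑ n ∈ Icc 1 N, f n ≤ ∏ p ∈ M.primesBelow, s p := by
  have hasSum_smooth : HasSum (M.smoothNumbers.indicator f) (∏ p ∈ M.primesBelow, s p) := by
    rw [← hasSum_subtype_iff_indicator, ← prod_congr rfl fun p hp =>
      (hs p (Nat.prime_of_mem_primesBelow hp)).tsum_eq]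
    exact (EulerProduct.summable_and_hasSum_smoothNumbers_prod_primesBelow_tsum hf.1 hf.2
      (fun hp => (hs _ hp).summable.norm) M).2
  calc ∑ n ∈ Icc 1 N, f n = ∑ n ∈ Icc 1 N, M.smoothNumbers.indicator f n :=
        sum_congr rfl fun n hn => by
          rw [mem_Icc] at hn
          rw [Set.indicator_of_mem (Nat.mem_smoothNumbers_of_lt hn.1 (hn.2.trans_lt hNM))]
    _ ≤ ∏ p ∈ M.primesBelow, s p :=
        sum_le_hasSum _ (fun n _ => Set.indicator_nonneg (fun n _ => hf₀ n) n) hasSum_smooth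

lemma mul_moebius_apply_prime_pow_succ {R : Type*} [Ring R] (f : ArithmeticFunction R) {p : ℕ}
    (hp : p.Prime) (k : ℕ) :
    (f * (μ : ArithmeticFunction R)) (p ^ (k + 1)) = f (p ^ (k + 1)) - f (p ^ k) := by
  have sum_eq (i : ℕ) :
      f (p ^ i) = ∑ l ∈ range (i + 1), (f * (μ : ArithmeticFunction R)) (p ^ l) := by
    rw [← Nat.sum_divisors_prime_pow hp, ← coe_mul_zeta_apply, mul_assoc, coe_moebius_mul_coe_zeta,
      mul_one]
  rw [sum_eq (k + 1), sum_range_succ, ← sum_eq k, add_sub_cancel_left]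

lemma hasSum_mul_moebius_prime_pow {R : Type*} [CommRing R] [TopologicalSpace R]
    [IsTopologicalRing R] {f : ArithmeticFunction R} {p : ℕ} (hp : p.Prime) {x s : R}
    (hs : HasSum (fun k => f (p ^ k) * x ^ k) s) :
    HasSum (fun k => (f * (μ : ArithmeticFunction R)) (p ^ k) * x ^ k) ((1 - x) * s) := by
  have shifted : HasSum (fun k => f (p ^ (k + 1)) * x ^ (k + 1)) (s - f 1) := by
    simpa using (hasSum_nat_add_iff' 1).2 hs
  rw [← hasSum_nat_add_iff' 1]
  convert shifted.sub (hs.mul_left x) using 1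
  · ext k
    rw [mul_moebius_apply_prime_pow_succ f hp]
    ring
  · rw [sum_range_one, pow_zero, pow_zero, mul_one, mul_apply_one, intCoe_apply,
      moebius_apply_one, Int.cast_one, mul_one]
    ring

lemma mul_moebius_prime_pow_growth {R : Type*} [CommRing R] [LinearOrder R] [IsStrictOrderedRing R]
    {f : ArithmeticFunction R} {p : ℕ} (hp : p.Prime) {a : R} (ha : 1 ≤ a)
    (hf : ∀ k, 0 ≤ f (p ^ k)) (hgrowth : ∀ k, a * f (p ^ k) ≤ f (p ^ (k + 1))) (k : ℕ) :
    0 ≤ (f * (μ : ArithmeticFunction R)) (p ^ k) ∧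
      (a - 1) * (f * (μ : ArithmeticFunction R)) (p ^ k) ≤
        (f * (μ : ArithmeticFunction R)) (p ^ (k + 1)) := by
  have lower (i : ℕ) : (a - 1) * f (p ^ i) ≤ (f * (μ : ArithmeticFunction R)) (p ^ (i + 1)) := by
    rw [mul_moebius_apply_prime_pow_succ f hp]
    linarith [hgrowth i]
  have le_self : (f * (μ : ArithmeticFunction R)) (p ^ k) ≤ f (p ^ k) := by
    cases k with
    | zero => simp
    | succ k => linarith [mul_moebius_apply_prime_pow_succ f hp k, hf k]
  refine ⟨?_, (mul_le_mul_of_nonneg_left le_self (sub_nonneg.2 ha)).trans (lower k)⟩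
  cases k with
  | zero => simpa using hf 0
  | succ k => exact (mul_nonneg (sub_nonneg.2 ha) (hf k)).trans (lower k)

/-- The completely multiplicative function `n ↦ z ^ Ω(n)`, set to `0` at `n = 0` as an
arithmetic function must be. -/
def powCardFactors {R : Type*} [Semiring R] (z : R) : ArithmeticFunction R :=
  ⟨fun n => if n = 0 then 0 else z ^ Ω n, if_pos rfl⟩

lemma powCardFactors_apply {R : Type*} [Semiring R] (z : R) {n : ℕ} (hn : n ≠ 0) :
    powCardFactors z n = z ^ Ω n :=
  if_neg hn

lemma powCardFactors_prime_pow {R : Type*} [Semiring R] (z : R) {p : ℕ} (hp : p.Prime) (k : ℕ) :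
    powCardFactors z (p ^ k) = z ^ k := by
  rw [powCardFactors_apply z (pow_ne_zero k hp.ne_zero), cardFactors_apply_prime_pow hp]

lemma isMultiplicative_powCardFactors {R : Type*} [Semiring R] (z : R) :
    (powCardFactors z).IsMultiplicative := by
  refine IsMultiplicative.iff_ne_zero.2 ⟨by simp [powCardFactors_apply], fun hm hn _ => ?_⟩
  rw [powCardFactors_apply z (mul_ne_zero hm hn), powCardFactors_apply z hm,
    powCardFactors_apply z hn, cardFactors_mul hm hn, pow_add]

/-- The arithmetic function `g` with `z ^ Ω = g * ζ ^ j` for Dirichlet convolution; its Dirichlet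
series is that of `z ^ Ω` divided by the `j`-th power of the Riemann zeta function. -/
def omegaKernel {R : Type*} [Ring R] (z : R) (j : ℕ) : ArithmeticFunction R :=
  powCardFactors z * (μ : ArithmeticFunction R) ^ j

/-- The local factor of `omegaKernel z j` at a prime `p`, as a function of `x = p⁻ˢ`. -/
def omegaKernelFactor {K : Type*} [Field K] (z : K) (j : ℕ) (x : K) : K :=
  (1 - x) ^ j / (1 - z * x)

lemma omegaKernel_zero {R : Type*} [Ring R] (z : R) : omegaKernel z 0 = powCardFactors z := by
  rw [omegaKernel, pow_zero, mul_one]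

lemma omegaKernel_succ {R : Type*} [Ring R] (z : R) (j : ℕ) :
    omegaKernel z (j + 1) = omegaKernel z j * (μ : ArithmeticFunction R) := by
  rw [omegaKernel, omegaKernel, pow_succ, mul_assoc]

lemma omegaKernel_mul_zeta_pow {R : Type*} [CommRing R] (z : R) (j : ℕ) :
    omegaKernel z j * (ζ : ArithmeticFunction R) ^ j = powCardFactors z := by
  rw [omegaKernel, mul_assoc, ← mul_pow, coe_moebius_mul_coe_zeta, one_pow, mul_one]

lemma isMultiplicative_omegaKernel {R : Type*} [CommRing R] (z : R) (j : ℕ) :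
    (omegaKernel z j).IsMultiplicative :=
  (isMultiplicative_powCardFactors z).mul isMultiplicative_moebius.intCast.pow

lemma omegaKernelFactor_nonneg {K : Type*} [Field K] [LinearOrder K] [IsStrictOrderedRing K]
    {z x : K} (hx : x ≤ 1) (hzx : z * x ≤ 1) (j : ℕ) : 0 ≤ omegaKernelFactor z j x :=
  div_nonneg (pow_nonneg (sub_nonneg.2 hx) j) (sub_nonneg.2 hzx)

lemma hasSum_omegaKernel_prime_pow {K : Type*} [NormedField K] {z x : K} (hzx : ‖z * x‖ < 1)
    {p : ℕ} (hp : p.Prime) (j : ℕ) :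
    HasSum (fun k => omegaKernel z j (p ^ k) * x ^ k) (omegaKernelFactor z j x) := by
  induction j with
  | zero =>
    simpa [omegaKernelFactor, omegaKernel_zero, powCardFactors_prime_pow z hp, ← mul_pow] using
      hasSum_geometric_of_norm_lt_one hzx
  | succ j ih =>
    rw [omegaKernel_succ, omegaKernelFactor, pow_succ', mul_div_assoc]
    exact hasSum_mul_moebius_prime_pow hp ih

lemma omegaKernel_prime_pow_growth {R : Type*} [CommRing R] [LinearOrder R] [IsStrictOrderedRing R]
    {z : R} {j : ℕ} (hz : j ≤ z) {p : ℕ} (hp : p.Prime) (k : ℕ) :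
    0 ≤ omegaKernel z j (p ^ k) ∧
      (z - j) * omegaKernel z j (p ^ k) ≤ omegaKernel z j (p ^ (k + 1)) := by
  induction j generalizing k with
  | zero =>
    have hz₀ : 0 ≤ z := by simpa using hz
    simp only [omegaKernel_zero, powCardFactors_prime_pow z hp, Nat.cast_zero, sub_zero]
    exact ⟨pow_nonneg hz₀ k, (pow_succ' z k).ge⟩
  | succ j ih =>
    push_cast at hz ⊢
    rw [omegaKernel_succ, ← sub_sub]
    have growth := ih (by linarith)
    exact mul_moebius_prime_pow_growth hp (by linarith) (fun i => (growth i).1)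
      (fun i => (growth i).2) k

lemma omegaKernel_nonneg {R : Type*} [CommRing R] [LinearOrder R] [IsStrictOrderedRing R]
    {z : R} {j : ℕ} (hz : j ≤ z) (n : ℕ) : 0 ≤ omegaKernel z j n :=
  nonneg_of_prime_pow_nonneg (isMultiplicative_omegaKernel z j)
    (fun _ k hp => (omegaKernel_prime_pow_growth hz hp k).1) n

section Twist

/-- Pointwise multiplication by a completely multiplicative function `χ`, as an endomorphism of the
ring of arithmetic functions under Dirichlet convolution. -/
def twist {R : Type*} [CommSemiring R] (χ : ℕ →*₀ R) :
    ArithmeticFunction R →+* ArithmeticFunction R where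
  toFun f := ⟨fun n => χ n * f n, by simp⟩
  map_one' := by
    ext n
    rcases eq_or_ne n 1 with rfl | hn <;> simp [one_apply, *]
  map_mul' f g := by
    ext n
    simp only [coe_mk, mul_apply, mul_sum]
    refine sum_congr rfl fun d hd => ?_
    rw [← (Nat.mem_divisorsAntidiagonal.1 hd).1, map_mul]
    exact mul_mul_mul_comm _ _ _ _
  map_zero' := by ext; simp
  map_add' f g := by
    ext n
    exact mul_add _ _ _

lemma twist_apply {R : Type*} [CommSemiring R] (χ : ℕ →*₀ R) (f : ArithmeticFunction R) (n : ℕ) :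
    twist χ f n = χ n * f n :=
  rfl

lemma isMultiplicative_twist {R : Type*} [CommSemiring R] (χ : ℕ →*₀ R) {f : ArithmeticFunction R}
    (hf : f.IsMultiplicative) : (twist χ f).IsMultiplicative :=
  ⟨by simp [twist_apply, hf.1], fun hmn => by
    simp only [twist_apply, map_mul, hf.2 hmn, mul_mul_mul_comm]⟩

variable {χ : ℕ →*₀ ℝ} {z : ℝ} {j : ℕ}

lemma twist_omegaKernel_nonneg (hχ : ∀ n, 0 ≤ χ n) (hz : j ≤ z) (n : ℕ) :
    0 ≤ twist χ (omegaKernel z j) n :=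
  mul_nonneg (hχ n) (omegaKernel_nonneg hz n)

lemma sum_twist_omegaKernel_le (hχ : ∀ n, 0 ≤ χ n) (hz : j ≤ z)
    (hχz : ∀ p : ℕ, p.Prime → z * χ p < 1) {N M : ℕ} (hNM : N < M) :
    ∑ n ∈ Icc 1 N, twist χ (omegaKernel z j) n ≤
      ∏ p ∈ M.primesBelow, omegaKernelFactor z j (χ p) := by
  refine sum_le_prod_primesBelow (isMultiplicative_twist χ (isMultiplicative_omegaKernel z j))
    (twist_omegaKernel_nonneg hχ hz) (fun p hp => ?_) hNM
  have hnorm : ‖z * χ p‖ < 1 := by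
    rw [Real.norm_of_nonneg (mul_nonneg (j.cast_nonneg.trans hz) (hχ p))]
    exact hχz p hp
  simpa only [twist_apply, map_pow, mul_comm] using hasSum_omegaKernel_prime_pow hnorm hp j

theorem sum_mul_pow_cardFactors_le (hχ : ∀ n, 0 ≤ χ n) (hz : j ≤ z)
    (hχz : ∀ p : ℕ, p.Prime → z * χ p < 1) {N M : ℕ} (hNM : N < M) :
    ∑ n ∈ Icc 1 N, χ n * z ^ Ω n ≤
      (∏ p ∈ M.primesBelow, omegaKernelFactor z j (χ p)) * (∑ n ∈ Icc 1 N, χ n) ^ j := by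
  have ne_zero {n : ℕ} (hn : n ∈ Icc 1 N) : n ≠ 0 := Nat.one_le_iff_ne_zero.1 (mem_Icc.1 hn).1
  have sum_twist_zeta : ∑ n ∈ Icc 1 N, twist χ (ζ : ArithmeticFunction ℝ) n = ∑ n ∈ Icc 1 N, χ n :=
    sum_congr rfl fun n hn => by simp [twist_apply, ne_zero hn]
  calc ∑ n ∈ Icc 1 N, χ n * z ^ Ω n
      = ∑ n ∈ Icc 1 N, twist χ (powCardFactors z) n :=
        sum_congr rfl fun n hn => by rw [twist_apply, powCardFactors_apply z (ne_zero hn)]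
    _ = ∑ n ∈ Icc 1 N, (twist χ (omegaKernel z j) * twist χ (ζ : ArithmeticFunction ℝ) ^ j) n := by
        rw [← map_pow, ← map_mul, omegaKernel_mul_zeta_pow]
    _ ≤ (∑ n ∈ Icc 1 N, twist χ (omegaKernel z j) n) *
          (∑ n ∈ Icc 1 N, twist χ (ζ : ArithmeticFunction ℝ) n) ^ j :=
        sum_mul_pow_le_sum_mul_sum_pow (twist_omegaKernel_nonneg hχ hz)
          (fun n => mul_nonneg (hχ n) (Nat.cast_nonneg _)) j N
    _ ≤ (∏ p ∈ M.primesBelow, omegaKernelFactor z j (χ p)) * (∑ n ∈ Icc 1 N, χ n) ^ j := by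
        rw [sum_twist_zeta]
        gcongr
        · exact pow_nonneg (sum_nonneg fun n _ => hχ n) j
        · exact sum_twist_omegaKernel_le hχ hz hχz hNM

end Twist

/-- The completely multiplicative function `n ↦ 1_{(n, q) = 1} / n`; at `n = 0` the inverse gives
the value `0` also for `q = 1`. -/
noncomputable def coprimeInv (q : ℕ) : ℕ →*₀ ℝ where
  toFun n := if n.Coprime q then (n : ℝ)⁻¹ else 0
  map_zero' := by simp
  map_one' := by simp
  map_mul' m n := by
    simp only [Nat.coprime_mul_iff_left, Nat.cast_mul, mul_inv]
    split_ifs <;> simp_all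

lemma coprimeInv_apply (q n : ℕ) : coprimeInv q n = if n.Coprime q then (n : ℝ)⁻¹ else 0 :=
  rfl

lemma coprimeInv_nonneg (q n : ℕ) : 0 ≤ coprimeInv q n := by
  rw [coprimeInv_apply]
  positivity

lemma coprimeInv_six_of_prime_of_five_le {p : ℕ} (hp : p.Prime) (h5 : 5 ≤ p) :
    coprimeInv 6 p = (p : ℝ)⁻¹ := by
  have h2 : p.Coprime 2 := (Nat.coprime_primes hp Nat.prime_two).2 (by lia)
  have h3 : p.Coprime 3 := (Nat.coprime_primes hp Nat.prime_three).2 (by lia)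
  exact if_pos (h2.mul_right h3)

lemma three_mul_coprimeInv_six_lt_one {p : ℕ} (hp : p.Prime) : 3 * coprimeInv 6 p < 1 := by
  rcases lt_or_ge p 5 with h | h
  · have := hp.two_le
    interval_cases p <;> norm_num [coprimeInv_apply]
  · rw [coprimeInv_six_of_prime_of_five_le hp h, ← div_eq_mul_inv, div_lt_one (by positivity)]
    exact_mod_cast (by lia : 3 < p)

-- The local factor at `n` is bounded by `b n / b (n - 2)` with `b n = (n - 1) / (n + 3/5)`, because
-- `(1 - 1/n) ^ 2 ≤ (n - 7/5) / (n + 3/5)`; below, `n = 2 * k + 5` and `b` is scaled by `9/5`.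
lemma omegaKernelFactor_mul_le {k : ℝ} (hk : 0 ≤ k) :
    omegaKernelFactor 3 3 (2 * k + 5)⁻¹ * (9 * (k + 1) / (5 * k + 9)) ≤
      9 * (k + 2) / (5 * k + 14) := by
  have factor_eq : omegaKernelFactor 3 3 (2 * k + 5)⁻¹ =
      4 * (k + 2) ^ 3 / ((2 * k + 5) ^ 2 * (k + 1)) := by
    rw [omegaKernelFactor, show 1 - (2 * k + 5)⁻¹ = 2 * (k + 2) / (2 * k + 5) by field_simp; ring,
      show 1 - 3 * (2 * k + 5)⁻¹ = 2 * (k + 1) / (2 * k + 5) by field_simp; ring]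
    field_simp
    ring
  have cubic_le : 4 * (k + 2) ^ 2 * (5 * k + 14) ≤ (2 * k + 5) ^ 2 * (5 * k + 9) := by nlinarith
  calc omegaKernelFactor 3 3 (2 * k + 5)⁻¹ * (9 * (k + 1) / (5 * k + 9))
      = 9 * (k + 2) * (4 * (k + 2) ^ 2) / ((2 * k + 5) ^ 2 * (5 * k + 9)) := by
        rw [factor_eq]
        field_simp
    _ ≤ 9 * (k + 2) / (5 * k + 14) := by
        rw [div_le_div_iff₀ (by positivity) (by positivity), mul_assoc]
        gcongr

lemma prod_primesBelow_omegaKernelFactor_le (k : ℕ) :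
    ∏ p ∈ Nat.primesBelow (2 * k + 4), omegaKernelFactor 3 3 (coprimeInv 6 p) ≤
      9 * ((k : ℝ) + 1) / (5 * k + 9) := by
  induction k with
  | zero =>
    rw [show Nat.primesBelow (2 * 0 + 4) = {2, 3} by decide, prod_pair (by norm_num)]
    norm_num [omegaKernelFactor, coprimeInv_apply]
  | succ k ih =>
    have not_prime_even : ¬ (2 * k + 4).Prime :=
      Nat.not_prime_of_dvd_of_lt (m := 2) ⟨k + 2, by ring⟩ le_rfl (by lia)
    have bound_succ : 9 * (((k + 1 : ℕ) : ℝ) + 1) / (5 * ((k + 1 : ℕ) : ℝ) + 9) =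
        9 * ((k : ℝ) + 2) / (5 * k + 14) := by
      push_cast
      ring
    rw [show 2 * (k + 1) + 4 = 2 * k + 5 + 1 by ring, Nat.primesBelow_succ (2 * k + 5),
      Nat.primesBelow_succ (2 * k + 4), if_neg not_prime_even, bound_succ]
    split_ifs with hp
    · have lt_one := three_mul_coprimeInv_six_lt_one hp
      have factor_nonneg : 0 ≤ omegaKernelFactor 3 3 (coprimeInv 6 (2 * k + 5)) :=
        omegaKernelFactor_nonneg (by linarith [coprimeInv_nonneg 6 (2 * k + 5)]) lt_one.le 3
      rw [prod_insert (by simp [Nat.primesBelow])]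
      refine (mul_le_mul_of_nonneg_left ih factor_nonneg).trans ?_
      rw [coprimeInv_six_of_prime_of_five_le hp (by lia)]
      push_cast
      exact omegaKernelFactor_mul_le k.cast_nonneg
    · refine ih.trans ?_
      rw [div_le_div_iff₀ (by positivity) (by positivity)]
      nlinarith

lemma prod_primesBelow_omegaKernelFactor_le_nine_fifths (k : ℕ) :
    ∏ p ∈ Nat.primesBelow (2 * k + 4), omegaKernelFactor 3 3 (coprimeInv 6 p) ≤ 9 / 5 := by
  refine (prod_primesBelow_omegaKernelFactor_le k).trans ?_
  rw [div_le_div_iff₀ (by positivity) (by norm_num)]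
  linarith

lemma sum_coprimeInv_Icc_add_le (q N : ℕ) :
    ∑ n ∈ Icc 1 (N + q), coprimeInv q n ≤
      ∑ n ∈ Icc 1 N, coprimeInv q n + q.totient / (N + 1) := by
  have block : ∑ n ∈ Ico (N + 1) (N + 1 + q), coprimeInv q n ≤ q.totient / (N + 1) := by
    simp only [coprimeInv_apply, Nat.coprime_comm (m := q)]
    rw [← sum_filter, ← Nat.filter_coprime_Ico_eq_totient q (N + 1), div_eq_mul_inv, ← nsmul_eq_mul]
    refine sum_le_card_nsmul _ _ _ fun n hn => ?_
    gcongr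
    exact_mod_cast (mem_Ico.1 (mem_filter.1 hn).1).1
  have split : ∑ n ∈ Icc 1 (N + q), coprimeInv q n =
      ∑ n ∈ Icc 1 N, coprimeInv q n + ∑ n ∈ Ico (N + 1) (N + 1 + q), coprimeInv q n := by
    simp only [← Ico_add_one_right_eq_Icc]
    rw [sum_Ico_consecutive _ (by lia) (by lia), add_right_comm]
  linarith

lemma div_add_le_log_sub_log {a b : ℝ} (ha : 0 < a) (hb : 0 ≤ b) :
    b / (a + b) ≤ Real.log (a + b) - Real.log a := by
  have h := Real.one_sub_inv_le_log_of_pos (x := (a + b) / a) (by positivity)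
  rw [Real.log_div (by positivity) ha.ne', inv_div] at h
  convert h using 1
  field_simp
  ring

lemma three_halves_le_log_five : 1.5 ≤ Real.log 5 := by
  have h : Real.log (2 ^ 9) ≤ Real.log (5 ^ 4) := Real.log_le_log (by norm_num) (by norm_num)
  rw [Real.log_pow, Real.log_pow] at h
  push_cast at h
  linarith [Real.log_two_gt_d9]

lemma sum_coprimeInv_six_le_of_le_ten {N : ℕ} (hN : N ≤ 10) :
    ∑ n ∈ Icc 1 N, coprimeInv 6 n ≤ 1.35 :=
  calc ∑ n ∈ Icc 1 N, coprimeInv 6 n ≤ ∑ n ∈ Icc 1 10, coprimeInv 6 n :=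
        sum_le_sum_of_subset_of_nonneg (Icc_subset_Icc_right hN) fun n _ _ => coprimeInv_nonneg 6 n
    _ ≤ 1.35 := by norm_num [sum_Icc_succ_top, coprimeInv_apply]

lemma sum_coprimeInv_six_le_log {N : ℕ} (hN : 5 ≤ N) :
    ∑ n ∈ Icc 1 N, coprimeInv 6 n ≤ 0.9 * Real.log N := by
  induction N using Nat.strong_induction_on with
  | _ N ih =>
    rcases le_or_gt N 10 with h | h
    · have hlog : Real.log 5 ≤ Real.log N := Real.log_le_log (by norm_num) (by exact_mod_cast hN)
      linarith [sum_coprimeInv_six_le_of_le_ten h, three_halves_le_log_five]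
    · obtain ⟨K, rfl⟩ : ∃ K, N = K + 6 := ⟨N - 6, by lia⟩
      have hK : (5 : ℝ) ≤ K := by exact_mod_cast (by lia : 5 ≤ K)
      have block_le : 2 / ((K : ℝ) + 1) ≤ 0.9 * (6 / (K + 6)) := by
        rw [← mul_div_assoc, div_le_div_iff₀ (by positivity) (by positivity)]
        linarith
      have log_step : 6 / ((K : ℝ) + 6) ≤ Real.log (K + 6) - Real.log K :=
        div_add_le_log_sub_log (by positivity) (by norm_num)
      have sum_step := sum_coprimeInv_Icc_add_le 6 K
      rw [show Nat.totient 6 = 2 by decide] at sum_step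
      push_cast at sum_step ⊢
      linarith [ih K (by lia) (by lia)]

theorem sum_coprime_six_bound :
    ∀ x : ℝ, 5 ≤ x →
      ∑ m ∈ (Finset.Icc 1 ⌊x⌋₊).filter (fun m => Nat.gcd m 6 = 1),
          (3 : ℝ) ^ (cardFactors m) / m ≤ 1.32 * Real.log x ^ 3 := by
  intro x hx
  set N := ⌊x⌋₊
  have hN : 5 ≤ N := Nat.le_floor (by exact_mod_cast hx)
  have hlog : Real.log N ≤ Real.log x :=
    Real.log_le_log (by positivity) (Nat.floor_le (by linarith))
  have sum_nonneg : 0 ≤ ∑ n ∈ Icc 1 N, coprimeInv 6 n :=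
    Finset.sum_nonneg fun n _ => coprimeInv_nonneg 6 n
  have log_nonneg : 0 ≤ Real.log x := Real.log_nonneg (by linarith)
  calc ∑ m ∈ Icc 1 N with Nat.gcd m 6 = 1, (3 : ℝ) ^ cardFactors m / m
      = ∑ n ∈ Icc 1 N, coprimeInv 6 n * 3 ^ cardFactors n := by
        simp [sum_filter, coprimeInv_apply, Nat.Coprime, ite_mul, div_eq_inv_mul]
    _ ≤ (∏ p ∈ Nat.primesBelow (2 * N + 4), omegaKernelFactor 3 3 (coprimeInv 6 p)) *
          (∑ n ∈ Icc 1 N, coprimeInv 6 n) ^ 3 :=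
        sum_mul_pow_cardFactors_le (coprimeInv_nonneg 6) (by norm_num)
          (fun _ => three_mul_coprimeInv_six_lt_one) (by lia)
    _ ≤ 9 / 5 * (0.9 * Real.log x) ^ 3 := by
        gcongr
        · exact prod_primesBelow_omegaKernelFactor_le_nine_fifths N
        · exact (sum_coprimeInv_six_le_log hN).trans (by gcongr)
    _ ≤ 1.32 * Real.log x ^ 3 := by
        linarith [mul_pow 0.9 (Real.log x) 3, pow_nonneg log_nonneg 3]
end
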